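/- arXiv:1411.4196 — 3 statements merged into one kernel-verified Lean document; each statement's English description precedes it below -/
import Mathlib

section
/- Let n ≥ 2 and let d be a real number. If 𝒜 and ℬ are families of subsets of [n] with |𝒜|·|ℬ| = n^d·2^n, then c(𝒜,ℬ) ≤ 2^{−d/300}·|𝒜|·|ℬ|. -/
open Finset

/-- `crossComp 𝒜 ℬ` is the number of pairs `(A, B) ∈ 𝒜 × ℬ` with `A ⊊ B`. -/
def crossComp {n : ℕ} (𝒜 ℬ : Finset (Finset (Fin n))) : ℕ :=
  ((𝒜 ×ˢ ℬ).filter (fun p => p.1 ⊂ p.2)).card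

/-!
For `N ≥ 2` and `δ = log_N 2 / 300` (so `N ^ δ = 2 ^ (1 / 300)`), families on a ground set of size
`k ≤ N` with `y = |𝒜| |ℬ|` have at most `(2 ^ k) ^ δ * y ^ (1 - δ)` pairs `A ⊆ B`. When
`y = n ^ d * 2 ^ n` and `k = N = n`, this is `2 ^ (-d / 300) * y`.

One would like to prove this by induction on `k`, splitting both families according to whether
their members contain a given point. With `s` and `t` the ratios of the two outer blocks to the
middle one, this requires `1 + s ^ (1 - δ) + t ^ (1 - δ) ≤ 2 ^ δ * ((1 + s) * (1 + t)) ^ (1 - δ)`,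
which can fail only when `s` or `t` is smaller than a power of `1 / N`. There are two ways around
this, and neither suffices alone.
* One may replace `t ^ (1 - δ)` by `1.05 * t + η` with `η` a power of `1 / N`, losing a factor
  `1 + η` at every step. Run with the exponent `3 / 2 * δ`, this already gives the bound when
  `y ≥ N * 2 ^ k`, since the better exponent pays for the total loss.
* When `y ≤ N * 2 ^ k`, each outer block can be bounded by its total number of pairs, and
  the induction step goes through without loss.
-/

open Real

section RealInequalities

variable {c s t x y δ η κ q : ℝ}

lemma rpow_add_rpow_le_two_rpow_mul (hq : 0 ≤ q) (hq1 : q ≤ 1) (hx : 0 ≤ x) (hy : 0 ≤ y) :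
    x ^ q + y ^ q ≤ 2 ^ (1 - q) * (x + y) ^ q := by
  have hconcave := (concaveOn_rpow hq hq1).2 (Set.mem_Ici.2 hx) (Set.mem_Ici.2 hy)
    (show (0 : ℝ) ≤ 1 / 2 by norm_num) (show (0 : ℝ) ≤ 1 / 2 by norm_num) (by norm_num)
  simp only [smul_eq_mul, ← mul_add] at hconcave
  rw [mul_rpow (by norm_num) (by positivity), div_rpow (by norm_num) (by norm_num),
    one_rpow] at hconcave
  rw [rpow_sub two_pos, rpow_one]
  calc x ^ q + y ^ q = 2 * (1 / 2 * (x ^ q + y ^ q)) := by ring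
    _ ≤ 2 * (1 / 2 ^ q * (x + y) ^ q) := by gcongr
    _ = 2 / 2 ^ q * (x + y) ^ q := by ring

lemma one_add_rpow_one_sub_le (hδ : 0 ≤ δ) (hδ1 : δ ≤ 1) (hs : 0 ≤ s) :
    1 + s ^ (1 - δ) ≤ 2 ^ δ * (1 + s) ^ (1 - δ) := by
  simpa using rpow_add_rpow_le_two_rpow_mul (sub_nonneg.2 hδ1) (by linarith) zero_le_one hs

lemma one_add_mul_one_sub_le_rpow (hδ : 0 ≤ δ) (hx : -1 < x) :
    (1 + x) * (1 - δ * x) ≤ (1 + x) ^ (1 - δ) := by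
  have hx1 : 0 < 1 + x := by linarith
  have hlog : log (1 + x) ≤ x := by linarith [log_le_sub_one_of_pos hx1]
  have hexp : 1 - δ * x ≤ (1 + x) ^ (-δ) := by
    rw [rpow_def_of_pos hx1]
    linarith [add_one_le_exp (log (1 + x) * -δ), mul_le_mul_of_nonneg_left hlog hδ]
  calc (1 + x) * (1 - δ * x) ≤ (1 + x) * (1 + x) ^ (-δ) := by gcongr
    _ = (1 + x) ^ (1 - δ) := by rw [sub_eq_add_neg, rpow_add hx1, rpow_one]

lemma rpow_one_sub_le (hδ : 0 ≤ δ) (hδ1 : δ ≤ 1) (ht : 0 ≤ t) (hc : 0 < c) :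
    t ^ (1 - δ) ≤ c ^ (-δ) * ((1 - δ) * t + δ * c) :=
  calc t ^ (1 - δ) = c ^ (-δ) * (t ^ (1 - δ) * c ^ δ) := by
        rw [rpow_neg hc.le]; field_simp
    _ ≤ c ^ (-δ) * ((1 - δ) * t + δ * c) := by
        gcongr
        exact geom_mean_le_arith_mean2_weighted (sub_nonneg.2 hδ1) hδ ht hc.le (by ring)

lemma rpow_one_sub_le_mul_add (hδ : 0 ≤ δ) (hδ1 : δ ≤ 1) (ht : 0 ≤ t) (hc : 0 < c)
    (hcκ : c ^ (-δ) ≤ κ) (hκ : κ * δ ≤ 1) : t ^ (1 - δ) ≤ κ * t + c := by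
  have hκ0 : 0 ≤ κ := (rpow_nonneg hc.le _).trans hcκ
  calc t ^ (1 - δ) ≤ c ^ (-δ) * ((1 - δ) * t + δ * c) := rpow_one_sub_le hδ hδ1 ht hc
    _ ≤ κ * ((1 - δ) * t + δ * c) := by
        have := mul_nonneg (sub_nonneg.2 hδ1) ht
        gcongr
    _ = κ * t - κ * δ * t + κ * δ * c := by ring
    _ ≤ κ * t - 0 + 1 * c := by gcongr; positivity
    _ = κ * t + c := by ring

lemma one_add_mul_le_two_rpow (hδ : 0 ≤ δ) : 1 + 0.69 * δ ≤ 2 ^ δ := by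
  rw [rpow_def_of_pos two_pos]
  nlinarith [add_one_le_exp (log 2 * δ), log_two_gt_d9]

lemma sixteen_rpow_le (hδ : 0 ≤ δ) (hδ1 : δ ≤ 1 / 200) : 16 ^ δ ≤ 1 + 2.85 * δ := by
  have hlog : log 16 ≤ 2.78 := by
    rw [show (16 : ℝ) = 2 ^ 4 by norm_num, log_pow]
    norm_num
    linarith [log_two_lt_d9]
  calc 16 ^ δ = exp (log 16 * δ) := rpow_def_of_pos (by norm_num) δ
    _ ≤ exp (2.78 * δ) := by gcongr
    _ ≤ 1 / (1 - 2.78 * δ) :=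
        exp_bound_div_one_sub_of_interval (by positivity) (by linarith)
    _ ≤ 1 + 2.85 * δ := by
        rw [div_le_iff₀ (by linarith)]
        nlinarith

lemma rpow_one_sub_le_add_of_le_sixteenth (hδ : 0 ≤ δ) (hδ1 : δ ≤ 1 / 200) (hs : 0 ≤ s)
    (hs1 : s ≤ 1 / 16) : s ^ (1 - δ) ≤ s + 0.25 * δ := by
  have hpow : ((1 / 16 : ℝ)) ^ (-δ) ≤ 1 + 2.85 * δ := by
    rw [one_div, inv_rpow (by norm_num), rpow_neg (by norm_num), inv_inv]
    exact sixteen_rpow_le hδ hδ1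
  calc s ^ (1 - δ) ≤ (1 / 16) ^ (-δ) * ((1 - δ) * s + δ * (1 / 16)) :=
        rpow_one_sub_le hδ (by linarith) hs (by norm_num)
    _ ≤ (1 + 2.85 * δ) * (s + δ * (1 / 16)) := by
        have hs' : 0 ≤ (1 - δ) * s := mul_nonneg (by linarith) hs
        gcongr
        exact mul_le_of_le_one_left hs (sub_le_self 1 hδ)
    _ ≤ s + 0.25 * δ := by nlinarith

lemma two_point_of_le_sixteenth (hδ : 0 ≤ δ) (hδ1 : δ ≤ 1 / 200) (hs : 0 ≤ s) (hs1 : s ≤ 1 / 16)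
    (ht : 0 ≤ t) (ht1 : t ≤ 1 / 16) :
    1 + s ^ (1 - δ) + t ^ (1 - δ) ≤ 2 ^ δ * ((1 + s) * (1 + t)) ^ (1 - δ) := by
  have hst : s * t ≤ 1 / 256 := by nlinarith
  have hst0 : 0 ≤ s * t := by positivity
  have hprod : (1 + s + t) * (1 - 0.13 * δ) ≤ ((1 + s) * (1 + t)) ^ (1 - δ) :=
    calc (1 + s + t) * (1 - 0.13 * δ)
        ≤ (1 + (s + t + s * t)) * (1 - δ * (s + t + s * t)) := by
          have hsmall : δ * (s + t + s * t) ≤ δ * 0.13 := by gcongr; linarith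
          exact mul_le_mul (by linarith) (by linarith) (by linarith) (by positivity)
      _ ≤ (1 + (s + t + s * t)) ^ (1 - δ) := one_add_mul_one_sub_le_rpow hδ (by linarith)
      _ = ((1 + s) * (1 + t)) ^ (1 - δ) := by ring_nf
  calc 1 + s ^ (1 - δ) + t ^ (1 - δ) ≤ 1 + (s + 0.25 * δ) + (t + 0.25 * δ) := by
        gcongr <;> exact rpow_one_sub_le_add_of_le_sixteenth hδ hδ1 ‹_› ‹_›
    _ ≤ (1 + s + t) * (1 + 0.55 * δ) := by nlinarith
    _ ≤ (1 + s + t) * ((1 + 0.69 * δ) * (1 - 0.13 * δ)) := by gcongr; nlinarith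
    _ = (1 + 0.69 * δ) * ((1 + s + t) * (1 - 0.13 * δ)) := by ring
    _ ≤ 2 ^ δ * ((1 + s) * (1 + t)) ^ (1 - δ) := by
        gcongr
        · exact mul_nonneg (by positivity) (by linarith)
        · exact one_add_mul_le_two_rpow hδ

lemma two_point_of_one_le (hδ : 0 ≤ δ) (hδ1 : δ ≤ 1 / 200) (hs : 1 ≤ s) (ht : 1 ≤ t) :
    1 + s ^ (1 - δ) + t ^ (1 - δ) ≤ 2 ^ δ * ((1 + s) * (1 + t)) ^ (1 - δ) := by
  have two_rpow_mul : (2 : ℝ) ^ δ * 2 ^ (1 - δ) = 2 := by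
    rw [← rpow_add two_pos, add_sub_cancel, rpow_one]
  have hs2 : 2 ≤ 2 ^ δ * (1 + s) ^ (1 - δ) := by
    rw [← two_rpow_mul]
    gcongr <;> linarith
  have ht2 : 1 + t ^ (1 - δ) / 2 ≤ (1 + t) ^ (1 - δ) := by
    have htwo : 2 ^ δ ≤ (1.02 : ℝ) := by
      have hlow : (1.98 : ℝ) ≤ 2 ^ (1 - δ) := by
        have := one_add_mul_one_sub_le_rpow hδ (x := 1) (by norm_num)
        norm_num at this
        linarith
      nlinarith [rpow_pos_of_pos (two_pos (α := ℝ)) δ]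
    have hT := one_add_rpow_one_sub_le hδ (by linarith) (zero_le_one.trans ht)
    have ht1 : 1 ≤ t ^ (1 - δ) := one_le_rpow ht (by linarith)
    have hT0 : 0 ≤ (1 + t) ^ (1 - δ) := by positivity
    nlinarith
  calc 1 + s ^ (1 - δ) + t ^ (1 - δ)
      ≤ 2 ^ δ * (1 + s) ^ (1 - δ) + 2 * (t ^ (1 - δ) / 2) := by
        linarith [one_add_rpow_one_sub_le hδ (by linarith) (zero_le_one.trans hs)]
    _ ≤ 2 ^ δ * (1 + s) ^ (1 - δ) + 2 ^ δ * (1 + s) ^ (1 - δ) * (t ^ (1 - δ) / 2) := by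
        gcongr
    _ = 2 ^ δ * (1 + s) ^ (1 - δ) * (1 + t ^ (1 - δ) / 2) := by ring
    _ ≤ 2 ^ δ * (1 + s) ^ (1 - δ) * (1 + t) ^ (1 - δ) := by gcongr
    _ = 2 ^ δ * ((1 + s) * (1 + t)) ^ (1 - δ) := by
        rw [mul_rpow (by linarith) (by linarith), mul_assoc]

lemma two_point_linear_of_le_one (hδ : 0 ≤ δ) (hδ1 : δ ≤ 1 / 200) (hs : 1 / 16 ≤ s) (ht : 0 ≤ t)
    (ht1 : t ≤ 1) :
    1 + s ^ (1 - δ) + 1.05 * t ≤ 2 ^ δ * ((1 + s) * (1 + t)) ^ (1 - δ) := by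
  have hS : 1 + s ^ (1 - δ) ≤ 2 ^ δ * (1 + s) ^ (1 - δ) :=
    one_add_rpow_one_sub_le hδ (by linarith) (by linarith)
  have hS1 : 1.0621 ≤ 2 ^ δ * (1 + s) ^ (1 - δ) :=
    calc (1.0621 : ℝ) ≤ 1 * ((1 + 1 / 16) * (1 - δ * (1 / 16))) := by linarith
      _ ≤ 2 ^ δ * (1 + 1 / 16) ^ (1 - δ) := by
          gcongr
          · nlinarith
          · exact one_le_rpow one_le_two hδ
          · exact one_add_mul_one_sub_le_rpow hδ (by norm_num)
      _ ≤ 2 ^ δ * (1 + s) ^ (1 - δ) := by gcongr; linarith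
  have hT : 1 + 0.99 * t ≤ (1 + t) ^ (1 - δ) :=
    calc 1 + 0.99 * t ≤ (1 + t) * (1 - δ * t) := by
          nlinarith [mul_le_mul_of_nonneg_right hδ1 ht,
            mul_le_mul_of_nonneg_left ht1 (mul_nonneg hδ ht)]
      _ ≤ (1 + t) ^ (1 - δ) := one_add_mul_one_sub_le_rpow hδ (by linarith)
  calc 1 + s ^ (1 - δ) + 1.05 * t
      ≤ 2 ^ δ * (1 + s) ^ (1 - δ) + 1.0621 * (0.99 * t) := by linarith
    _ ≤ 2 ^ δ * (1 + s) ^ (1 - δ) + 2 ^ δ * (1 + s) ^ (1 - δ) * (0.99 * t) := by gcongr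
    _ = 2 ^ δ * (1 + s) ^ (1 - δ) * (1 + 0.99 * t) := by ring
    _ ≤ 2 ^ δ * (1 + s) ^ (1 - δ) * (1 + t) ^ (1 - δ) := by gcongr
    _ = 2 ^ δ * ((1 + s) * (1 + t)) ^ (1 - δ) := by
        rw [mul_rpow (by linarith) (by linarith), mul_assoc]

lemma two_point {σ τ : ℝ} (hδ : 0 ≤ δ) (hδ1 : δ ≤ 1 / 200) (hη : 0 ≤ η) (hs : 0 ≤ s) (ht : 0 ≤ t)
    (hσ : σ ≤ s ^ (1 - δ)) (hσ' : σ ≤ 1.05 * s + η)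
    (hτ : τ ≤ t ^ (1 - δ)) (hτ' : τ ≤ 1.05 * t + η) :
    1 + σ + τ ≤ 2 ^ δ * ((1 + s) * (1 + t)) ^ (1 - δ) + η := by
  wlog hts : t ≤ s generalizing s t σ τ
  · rw [mul_comm (1 + s), add_right_comm]
    exact this ht hs hτ hτ' hσ hσ' (le_of_not_ge hts)
  rcases le_total s (1 / 16) with hs16 | hs16
  · linarith [two_point_of_le_sixteenth hδ hδ1 hs hs16 ht (hts.trans hs16)]
  rcases le_total t 1 with ht1 | ht1
  · linarith [two_point_linear_of_le_one hδ hδ1 hs16 ht ht1]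
  · linarith [two_point_of_one_le hδ hδ1 (ht1.trans hts) ht1]

lemma rpow_eq_rpow_mul_div_rpow (hx : 0 < x) (hy : 0 ≤ y) :
    y ^ q = x ^ q * (y / x) ^ q := by
  rw [← mul_rpow hx.le (by positivity), mul_div_cancel₀ y hx.ne']

lemma two_point_homogeneous {m u v V γ σ τ : ℝ} (hδ : 0 ≤ δ) (hδ1 : δ ≤ 1 / 200) (hη : 0 ≤ η)
    (hV : 0 < V) (hm : 0 < m) (hu : 0 ≤ u) (hv : 0 ≤ v) (hγ : γ ≤ V * m ^ (1 - δ))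
    (hσ : σ ≤ V * u ^ (1 - δ)) (hσ' : σ ≤ V * m ^ (1 - δ) * (1.05 * (u / m) + η))
    (hτ : τ ≤ V * v ^ (1 - δ)) (hτ' : τ ≤ V * m ^ (1 - δ) * (1.05 * (v / m) + η)) :
    γ + σ + τ ≤ V * ((1 + η) * 2 ^ δ) * ((m + u) * (m + v) / m) ^ (1 - δ) := by
  set W := V * m ^ (1 - δ) with hW_def
  have hW : 0 < W := by positivity
  rw [rpow_eq_rpow_mul_div_rpow hm hu, ← mul_assoc] at hσ
  rw [rpow_eq_rpow_mul_div_rpow hm hv, ← mul_assoc] at hτ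
  set P := ((1 + u / m) * (1 + v / m)) ^ (1 - δ) with hP_def
  have hP : 1 ≤ P :=
    one_le_rpow (one_le_mul_of_one_le_of_one_le (le_add_of_nonneg_right (by positivity))
      (le_add_of_nonneg_right (by positivity))) (by linarith)
  have htwo : (1 : ℝ) ≤ 2 ^ δ := one_le_rpow one_le_two hδ
  have hnormalized : 1 + σ / W + τ / W ≤ 2 ^ δ * P + η :=
    two_point hδ hδ1 hη (by positivity) (by positivity)
      ((div_le_iff₀' hW).2 hσ) ((div_le_iff₀' hW).2 hσ')
      ((div_le_iff₀' hW).2 hτ) ((div_le_iff₀' hW).2 hτ')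
  calc γ + σ + τ ≤ W + σ + τ := by gcongr
    _ = W * (1 + σ / W + τ / W) := by field_simp
    _ ≤ W * (2 ^ δ * P + η * (2 ^ δ * P)) := by
        refine mul_le_mul_of_nonneg_left (hnormalized.trans ?_) hW.le
        gcongr
        exact le_mul_of_one_le_right hη (one_le_mul_of_one_le_of_one_le htwo hP)
    _ = ((1 + η) * 2 ^ δ) * (W * P) := by ring
    _ = ((1 + η) * 2 ^ δ) * (V * ((m + u) * (m + v) / m) ^ (1 - δ)) := by
        rw [rpow_eq_rpow_mul_div_rpow hm (y := (m + u) * (m + v) / m) (by positivity),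
          ← mul_assoc V, hP_def]
        congr 3
        field_simp
    _ = V * ((1 + η) * 2 ^ δ) * ((m + u) * (m + v) / m) ^ (1 - δ) := by ring

lemma rpow_add_rpow_add_rpow_le_of_mul_eq_zero {a₀ a₁ b₀ b₁ : ℝ} (hq : 0 < q) (ha₀ : 0 ≤ a₀)
    (ha₁ : 0 ≤ a₁) (hb₀ : 0 ≤ b₀) (hb₁ : 0 ≤ b₁) (h : a₀ * b₁ = 0) :
    (a₀ * b₁) ^ q + (a₁ * b₁) ^ q + (a₀ * b₀) ^ q ≤ ((a₀ + a₁) * (b₀ + b₁)) ^ q := by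
  rcases mul_eq_zero.1 h with rfl | rfl
  · simp only [zero_mul, zero_rpow hq.ne', zero_add, add_zero]
    gcongr
    linarith
  · simp only [mul_zero, zero_rpow hq.ne', zero_add, add_zero]
    gcongr
    linarith

lemma four_block_sum_le {a₀ a₁ b₀ b₁ V γ σ τ : ℝ} (hδ : 0 ≤ δ) (hδ1 : δ ≤ 1 / 200) (hη : 0 ≤ η)
    (hV : 0 < V) (ha₀ : 0 ≤ a₀) (ha₁ : 0 ≤ a₁) (hb₀ : 0 ≤ b₀) (hb₁ : 0 ≤ b₁)
    (hγ : γ ≤ V * (a₀ * b₁) ^ (1 - δ)) (hσ : σ ≤ V * (a₁ * b₁) ^ (1 - δ))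
    (hτ : τ ≤ V * (a₀ * b₀) ^ (1 - δ))
    (hσ' : 0 < a₀ * b₁ → σ ≤ V * (a₀ * b₁) ^ (1 - δ) * (1.05 * (a₁ * b₁ / (a₀ * b₁)) + η))
    (hτ' : 0 < a₀ * b₁ → τ ≤ V * (a₀ * b₁) ^ (1 - δ) * (1.05 * (a₀ * b₀ / (a₀ * b₁)) + η)) :
    γ + σ + τ ≤ V * ((1 + η) * 2 ^ δ) * ((a₀ + a₁) * (b₀ + b₁)) ^ (1 - δ) := by
  rcases (mul_nonneg ha₀ hb₁).eq_or_lt with hm | hm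
  · have hfactor : 1 ≤ (1 + η) * 2 ^ δ :=
      one_le_mul_of_one_le_of_one_le (by linarith) (one_le_rpow one_le_two hδ)
    calc γ + σ + τ
        ≤ V * ((a₀ * b₁) ^ (1 - δ) + (a₁ * b₁) ^ (1 - δ) + (a₀ * b₀) ^ (1 - δ)) := by linarith
      _ ≤ V * ((a₀ + a₁) * (b₀ + b₁)) ^ (1 - δ) := by
          gcongr
          exact rpow_add_rpow_add_rpow_le_of_mul_eq_zero (by linarith) ha₀ ha₁ hb₀ hb₁ hm.symm
      _ ≤ V * ((1 + η) * 2 ^ δ) * ((a₀ + a₁) * (b₀ + b₁)) ^ (1 - δ) := by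
          gcongr
          exact le_mul_of_one_le_right hV.le hfactor
  · have hblocks : (a₀ + a₁) * (b₀ + b₁) =
        (a₀ * b₁ + a₁ * b₁) * (a₀ * b₁ + a₀ * b₀) / (a₀ * b₁) := by
      rw [eq_div_iff hm.ne']
      ring
    rw [hblocks]
    exact two_point_homogeneous hδ hδ1 hη hV hm (by positivity) (by positivity) hγ hσ (hσ' hm)
      hτ (hτ' hm)

lemma mul_rpow_mul_rpow_le {ε K M X : ℝ} (hε : 0 ≤ ε) (hM : 0 < M) (hX : 0 < X)
    (hy : X * M ≤ y) (hK : K ≤ X ^ ε) :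
    K * M ^ (δ + ε) * y ^ (1 - (δ + ε)) ≤ M ^ δ * y ^ (1 - δ) := by
  have hy0 : 0 < y := (by positivity : 0 < X * M).trans_le hy
  calc K * M ^ (δ + ε) * y ^ (1 - (δ + ε))
      = M ^ δ * y ^ (1 - (δ + ε)) * (K * M ^ ε) := by rw [rpow_add hM]; ring
    _ ≤ M ^ δ * y ^ (1 - (δ + ε)) * (X ^ ε * M ^ ε) := by gcongr
    _ = M ^ δ * y ^ (1 - (δ + ε)) * (X * M) ^ ε := by rw [mul_rpow hX.le hM.le]
    _ ≤ M ^ δ * y ^ (1 - (δ + ε)) * y ^ ε := by gcongr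
    _ = M ^ δ * y ^ (1 - δ) := by rw [mul_assoc, ← rpow_add hy0]; congr 2; ring

lemma rpow_mul_mul_rpow_one_sub (hx : 0 < x) (hy : 0 < y) (δ : ℝ) :
    y ^ δ * (x * y) ^ (1 - δ) = x ^ (-δ) * (x * y) := by
  rw [sub_eq_neg_add, rpow_add_one (by positivity), mul_rpow hx.le hy.le, rpow_neg hy.le]
  field_simp

lemma rpow_logb_two_mul {N : ℝ} (hN : 1 < N) (x : ℝ) : N ^ (logb N 2 * x) = 2 ^ x := by
  rw [rpow_mul (by linarith), rpow_logb (by linarith) hN.ne' two_pos]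

lemma two_rpow_le (hx : x ≤ 1 / 15) : (2 : ℝ) ^ x ≤ 1.05 :=
  calc (2 : ℝ) ^ x ≤ 2 ^ (15 : ℝ)⁻¹ := by gcongr <;> linarith
    _ ≤ 1.05 := by
      rw [rpow_inv_le_iff_of_pos (by norm_num) (by norm_num) (by norm_num)]
      norm_num

lemma one_add_inv_pow_le {N : ℝ} (hN : 2 ≤ N) {k : ℕ} (hk : k ≤ N) :
    (1 + (N ^ 11)⁻¹) ^ k ≤ 2 ^ (1 / 600 : ℝ) := by
  have hkN : k * (N ^ 11)⁻¹ ≤ 1 / 1024 :=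
    calc k * (N ^ 11)⁻¹ ≤ N * (N ^ 11)⁻¹ := by gcongr
      _ = (N ^ 10)⁻¹ := by field_simp
      _ ≤ (2 ^ 10)⁻¹ := by gcongr
      _ = 1 / 1024 := by norm_num
  calc (1 + (N ^ 11)⁻¹) ^ k ≤ exp (N ^ 11)⁻¹ ^ k := by
        gcongr
        linarith [add_one_le_exp (N ^ 11)⁻¹]
    _ = exp (k * (N ^ 11)⁻¹) := (exp_nat_mul _ k).symm
    _ ≤ exp (log 2 * (1 / 600)) := exp_le_exp.2 (by linarith [log_two_gt_d9])
    _ = 2 ^ (1 / 600 : ℝ) := (rpow_def_of_pos two_pos _).symm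

lemma logb_two_le_one {N : ℝ} (hN : 2 ≤ N) : logb N 2 ≤ 1 := by
  rw [logb_le_iff_le_rpow (by linarith) two_pos, rpow_one]
  exact hN

end RealInequalities

section Containments

variable {α : Type*} [DecidableEq α] {s : Finset α} {a : α} {𝒜 ℬ : Finset (Finset α)}

/-- The number of pairs `(A, B) ∈ 𝒜 × ℬ` with `A ⊆ B`. Allowing equality is harmless for an upper
bound on `crossComp`, and makes the count additive under splitting off a point. -/
def containments (𝒜 ℬ : Finset (Finset α)) : ℕ := #{p ∈ 𝒜 ×ˢ ℬ | p.1 ⊆ p.2}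

lemma containments_eq_sum (𝒜 ℬ : Finset (Finset α)) :
    containments 𝒜 ℬ = ∑ A ∈ 𝒜, #{B ∈ ℬ | A ⊆ B} := by
  simp only [containments, card_filter, sum_product]

lemma containments_le_card_mul_card (𝒜 ℬ : Finset (Finset α)) :
    containments 𝒜 ℬ ≤ #𝒜 * #ℬ :=
  (card_filter_le _ _).trans_eq (card_product 𝒜 ℬ)

lemma crossComp_le_containments {n : ℕ} (𝒜 ℬ : Finset (Finset (Fin n))) :
    crossComp 𝒜 ℬ ≤ containments 𝒜 ℬ :=
  card_le_card (monotone_filter_right _ fun _ _ h ↦ h.subset)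

lemma sum_eq_sum_nonMemberSubfamily_add_sum_memberSubfamily {M : Type*} [AddCommMonoid M] (a : α)
    (𝒜 : Finset (Finset α)) (f : Finset α → M) :
    ∑ A ∈ 𝒜, f A =
      ∑ A ∈ 𝒜.nonMemberSubfamily a, f A + ∑ A ∈ 𝒜.memberSubfamily a, f (insert a A) := by
  have hinj : Set.InjOn (insert a) (𝒜.memberSubfamily a : Set (Finset α)) :=
    insert_erase_invOn.2.injOn.mono fun A hA ↦ (mem_memberSubfamily.1 hA).2
  rw [← sum_image hinj, image_insert_memberSubfamily, nonMemberSubfamily, add_comm,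
    sum_filter_add_sum_filter_not]

lemma card_eq_card_nonMemberSubfamily_add_card_memberSubfamily (a : α) (𝒜 : Finset (Finset α)) :
    #𝒜 = #(𝒜.nonMemberSubfamily a) + #(𝒜.memberSubfamily a) := by
  rw [add_comm, card_memberSubfamily_add_card_nonMemberSubfamily]

lemma card_filter_superset_of_notMem {A : Finset α} (ha : a ∉ A) :
    #{B ∈ ℬ | A ⊆ B} =
      #{B ∈ ℬ.nonMemberSubfamily a | A ⊆ B} + #{B ∈ ℬ.memberSubfamily a | A ⊆ B} := by
  simp only [card_filter, sum_eq_sum_nonMemberSubfamily_add_sum_memberSubfamily a ℬ,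
    subset_insert_iff_of_notMem ha]

lemma card_filter_insert_superset {A : Finset α} (ha : a ∉ A) :
    #{B ∈ ℬ | insert a A ⊆ B} = #{B ∈ ℬ.memberSubfamily a | A ⊆ B} := by
  have hnon : ∀ B ∈ ℬ.nonMemberSubfamily a, ¬insert a A ⊆ B := fun B hB hAB ↦
    (mem_nonMemberSubfamily.1 hB).2 (hAB (mem_insert_self a A))
  simp only [card_filter, sum_eq_sum_nonMemberSubfamily_add_sum_memberSubfamily a ℬ,
    insert_subset_insert_iff ha]
  rw [sum_eq_zero fun B hB ↦ if_neg (hnon B hB), zero_add]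

lemma containments_eq_add_add (a : α) (𝒜 ℬ : Finset (Finset α)) :
    containments 𝒜 ℬ =
      containments (𝒜.nonMemberSubfamily a) (ℬ.memberSubfamily a) +
        containments (𝒜.memberSubfamily a) (ℬ.memberSubfamily a) +
        containments (𝒜.nonMemberSubfamily a) (ℬ.nonMemberSubfamily a) := by
  have hnon : ∑ A ∈ 𝒜.nonMemberSubfamily a, #{B ∈ ℬ | A ⊆ B} =
      containments (𝒜.nonMemberSubfamily a) (ℬ.nonMemberSubfamily a) +
        containments (𝒜.nonMemberSubfamily a) (ℬ.memberSubfamily a) := by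
    simp only [containments_eq_sum, ← sum_add_distrib]
    exact sum_congr rfl fun A hA ↦ card_filter_superset_of_notMem (mem_nonMemberSubfamily.1 hA).2
  have hmem : ∑ A ∈ 𝒜.memberSubfamily a, #{B ∈ ℬ | insert a A ⊆ B} =
      containments (𝒜.memberSubfamily a) (ℬ.memberSubfamily a) := by
    rw [containments_eq_sum]
    exact sum_congr rfl fun A hA ↦ card_filter_insert_superset (mem_memberSubfamily.1 hA).2
  rw [containments_eq_sum, sum_eq_sum_nonMemberSubfamily_add_sum_memberSubfamily a 𝒜, hnon, hmem]
  ring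

lemma nonMemberSubfamily_subset_powerset (h : 𝒜 ⊆ (insert a s).powerset) :
    𝒜.nonMemberSubfamily a ⊆ s.powerset := fun A hA ↦ by
  obtain ⟨hA, ha⟩ := mem_nonMemberSubfamily.1 hA
  exact mem_powerset.2 ((subset_insert_iff_of_notMem ha).1 (mem_powerset.1 (h hA)))

lemma memberSubfamily_subset_powerset (h : 𝒜 ⊆ (insert a s).powerset) :
    𝒜.memberSubfamily a ⊆ s.powerset := fun A hA ↦ by
  obtain ⟨hA, ha⟩ := mem_memberSubfamily.1 hA
  exact mem_powerset.2 ((insert_subset_insert_iff ha).1 (mem_powerset.1 (h hA)))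

/-- Families of subsets of `s` have at most `K * (2 ^ #s) ^ δ * (#𝒜 * #ℬ) ^ (1 - δ)` containments.
This is the property propagated by induction on the ground set; the factor `K` records the loss
accumulated on the way. -/
def ContainmentBound (s : Finset α) (δ K : ℝ) : Prop :=
  ∀ 𝒜 ⊆ s.powerset, ∀ ℬ ⊆ s.powerset,
    (containments 𝒜 ℬ : ℝ) ≤ K * (2 ^ #s) ^ δ * ((#𝒜 : ℝ) * #ℬ) ^ (1 - δ)

namespace ContainmentBound

variable {δ η K : ℝ}

lemma empty (hδ : 0 ≤ δ) : ContainmentBound (∅ : Finset α) δ 1 := by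
  intro 𝒜 h𝒜 ℬ hℬ
  have hcard : (#𝒜 : ℝ) * #ℬ ≤ 1 := by
    exact_mod_cast Nat.mul_le_mul (card_le_card h𝒜) (card_le_card hℬ)
  calc (containments 𝒜 ℬ : ℝ) ≤ #𝒜 * #ℬ := mod_cast containments_le_card_mul_card 𝒜 ℬ
    _ ≤ ((#𝒜 : ℝ) * #ℬ) ^ (1 - δ) :=
        self_le_rpow_of_le_one (by positivity) hcard (by linarith)
    _ = _ := by simp

lemma containments_insert_le (ha : a ∉ s) (hs : ContainmentBound s δ K) (hK : 0 < K)
    (hδ : 0 ≤ δ) (hδ1 : δ ≤ 1 / 200) (hη : 0 ≤ η) (h𝒜 : 𝒜 ⊆ (insert a s).powerset)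
    (hℬ : ℬ ⊆ (insert a s).powerset)
    (hlin : ∀ 𝒜' ⊆ s.powerset, ∀ ℬ' ⊆ s.powerset, ∀ m : ℝ, 0 < m → m ≤ (#𝒜 : ℝ) * #ℬ →
      (containments 𝒜' ℬ' : ℝ) ≤
        K * (2 ^ #s) ^ δ * m ^ (1 - δ) * (1.05 * ((#𝒜' : ℝ) * #ℬ' / m) + η)) :
    (containments 𝒜 ℬ : ℝ) ≤
      K * (1 + η) * (2 ^ #(insert a s)) ^ δ * ((#𝒜 : ℝ) * #ℬ) ^ (1 - δ) := by
  have h𝒜₀ := nonMemberSubfamily_subset_powerset h𝒜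
  have h𝒜₁ := memberSubfamily_subset_powerset h𝒜
  have hℬ₀ := nonMemberSubfamily_subset_powerset hℬ
  have hℬ₁ := memberSubfamily_subset_powerset hℬ
  have hfactor : K * (1 + η) * (2 ^ #(insert a s)) ^ δ =
      K * (2 ^ #s) ^ δ * ((1 + η) * 2 ^ δ) := by
    rw [card_insert_of_notMem ha, pow_succ, mul_rpow (by positivity) two_pos.le]
    ring
  have hm : (#(𝒜.nonMemberSubfamily a) : ℝ) * #(ℬ.memberSubfamily a) ≤ #𝒜 * #ℬ := by
    rw [card_eq_card_nonMemberSubfamily_add_card_memberSubfamily a 𝒜,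
      card_eq_card_nonMemberSubfamily_add_card_memberSubfamily a ℬ]
    exact mod_cast Nat.mul_le_mul (Nat.le_add_right _ _) (Nat.le_add_left _ _)
  rw [hfactor, containments_eq_add_add a,
    card_eq_card_nonMemberSubfamily_add_card_memberSubfamily a 𝒜,
    card_eq_card_nonMemberSubfamily_add_card_memberSubfamily a ℬ]
  push_cast
  exact four_block_sum_le hδ hδ1 hη (by positivity) (by positivity) (by positivity) (by positivity)
    (by positivity) (hs _ h𝒜₀ _ hℬ₁) (hs _ h𝒜₁ _ hℬ₁) (hs _ h𝒜₀ _ hℬ₀)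
    (fun h ↦ hlin _ h𝒜₁ _ hℬ₁ _ h hm) (fun h ↦ hlin _ h𝒜₀ _ hℬ₀ _ h hm)

lemma one_add_pow (hδ : 0 ≤ δ) (hδ1 : δ ≤ 1 / 200) (hη : 0 ≤ η)
    (hlin : ∀ t : ℝ, 0 ≤ t → t ^ (1 - δ) ≤ 1.05 * t + η) (s : Finset α) :
    ContainmentBound s δ ((1 + η) ^ #s) := by
  induction s using Finset.induction_on with
  | empty => simpa using empty hδ
  | insert a s ha ih =>
    intro 𝒜 h𝒜 ℬ hℬ
    have hstep := ih.containments_insert_le ha (by positivity) hδ hδ1 hη h𝒜 hℬ <| by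
      intro 𝒜' h𝒜' ℬ' hℬ' m hm _
      refine (ih 𝒜' h𝒜' ℬ' hℬ').trans ?_
      rw [rpow_eq_rpow_mul_div_rpow hm (y := (#𝒜' : ℝ) * #ℬ') (by positivity), ← mul_assoc]
      gcongr
      exact hlin _ (by positivity)
    rwa [← pow_succ, ← card_insert_of_notMem ha] at hstep

lemma one_of_large {X : ℝ} (hδ : 0 ≤ δ) (hδ1 : δ ≤ 1 / 200) (hX : 0 ≤ X)
    (hXδ : (2 * X) ^ δ ≤ 1.05)
    (hlarge : ∀ t ⊆ s, ∀ 𝒜 ⊆ t.powerset, ∀ ℬ ⊆ t.powerset, X * 2 ^ #t ≤ (#𝒜 : ℝ) * #ℬ →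
      (containments 𝒜 ℬ : ℝ) ≤ (2 ^ #t) ^ δ * ((#𝒜 : ℝ) * #ℬ) ^ (1 - δ)) :
    ContainmentBound s δ 1 := by
  induction s using Finset.induction_on with
  | empty => exact empty hδ
  | insert a s ha ih =>
    specialize ih fun t ht ↦ hlarge t (ht.trans (subset_insert a s))
    intro 𝒜 h𝒜 ℬ hℬ
    rcases le_total (X * 2 ^ #(insert a s)) ((#𝒜 : ℝ) * #ℬ) with hy | hy
    · simpa using hlarge _ subset_rfl 𝒜 h𝒜 ℬ hℬ hy
    have hstep := ih.containments_insert_le ha one_pos hδ hδ1 le_rfl h𝒜 hℬ <| by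
      intro 𝒜' _ ℬ' _ m hm hmy
      have hmδ : m ^ δ ≤ (2 ^ #s) ^ δ * 1.05 :=
        calc m ^ δ ≤ (2 ^ #s * (2 * X)) ^ δ := by
              gcongr
              rw [card_insert_of_notMem ha, pow_succ] at hy
              linarith
          _ = (2 ^ #s) ^ δ * (2 * X) ^ δ := mul_rpow (by positivity) (by positivity)
          _ ≤ (2 ^ #s) ^ δ * 1.05 := by gcongr
      calc (containments 𝒜' ℬ' : ℝ) ≤ #𝒜' * #ℬ' := mod_cast containments_le_card_mul_card 𝒜' ℬ'
        _ = m ^ δ * m ^ (1 - δ) * ((#𝒜' : ℝ) * #ℬ' / m) := by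
            rw [← rpow_add hm, add_sub_cancel, rpow_one, mul_div_cancel₀ _ hm.ne']
        _ ≤ (2 ^ #s) ^ δ * 1.05 * m ^ (1 - δ) * ((#𝒜' : ℝ) * #ℬ' / m) := by gcongr
        _ = _ := by ring
    simpa using hstep

end ContainmentBound

lemma containmentBound_one_add_inv_pow {N : ℝ} (hN : 2 ≤ N) (s : Finset α) :
    ContainmentBound s (logb N 2 * (1 / 200)) ((1 + (N ^ 11)⁻¹) ^ #s) := by
  have hN1 : 1 < N := by linarith
  have hL0 : 0 < logb N 2 := logb_pos hN1 one_lt_two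
  have hL1 := logb_two_le_one hN
  have hthreshold : (N ^ 11)⁻¹ ^ (-(logb N 2 * (1 / 200))) ≤ 1.05 :=
    calc (N ^ 11)⁻¹ ^ (-(logb N 2 * (1 / 200))) = N ^ (logb N 2 * (11 / 200)) := by
          rw [inv_rpow (by positivity), ← rpow_neg (by positivity), neg_neg, ← rpow_natCast,
            ← rpow_mul (by positivity)]
          congr 1
          push_cast
          ring
      _ ≤ 1.05 := (rpow_logb_two_mul hN1 _).trans_le (two_rpow_le (by norm_num))
  exact ContainmentBound.one_add_pow (by positivity) (by linarith) (by positivity)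
    (fun t ht ↦ rpow_one_sub_le_mul_add (by positivity) (by linarith) ht (by positivity)
      hthreshold (by linarith)) s

lemma containmentBound_one {N : ℝ} (hN : 2 ≤ N) (hs : #s ≤ N) :
    ContainmentBound s (logb N 2 * (1 / 300)) 1 := by
  have hN1 : 1 < N := by linarith
  have hL0 : 0 < logb N 2 := logb_pos hN1 one_lt_two
  have hL1 := logb_two_le_one hN
  have htwoN : (2 * N) ^ (logb N 2 * (1 / 300)) ≤ 1.05 :=
    calc (2 * N) ^ (logb N 2 * (1 / 300))
        ≤ (N * N) ^ (logb N 2 * (1 / 300)) := by gcongr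
      _ = 2 ^ (1 / 150 : ℝ) := by
          rw [mul_rpow (by positivity) (by positivity), rpow_logb_two_mul hN1,
            ← rpow_add two_pos]
          norm_num
      _ ≤ 1.05 := two_rpow_le (by norm_num)
  refine .one_of_large (X := N) (by positivity) (by linarith) (by positivity) htwoN
    fun t hts 𝒜 h𝒜 ℬ hℬ hy ↦ ?_
  have hexponent : logb N 2 * (1 / 200) = logb N 2 * (1 / 300) + logb N 2 * (1 / 600) := by ring
  have htN : (#t : ℝ) ≤ N := le_trans (mod_cast card_le_card hts) hs
  have hlossy := containmentBound_one_add_inv_pow hN t 𝒜 h𝒜 ℬ hℬ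
  rw [hexponent] at hlossy
  refine hlossy.trans (mul_rpow_mul_rpow_le (by positivity) (by positivity) (by positivity) hy ?_)
  rw [rpow_logb_two_mul hN1]
  exact one_add_inv_pow_le hN htN

theorem stmt0_general [Fintype α] (hα : 2 ≤ Fintype.card α) (d : ℝ) (𝒜 ℬ : Finset (Finset α))
    (h : (#𝒜 : ℝ) * #ℬ = (Fintype.card α : ℝ) ^ d * 2 ^ Fintype.card α) :
    (containments 𝒜 ℬ : ℝ) ≤ (2 : ℝ) ^ (-d / 300) * ((#𝒜 : ℝ) * #ℬ) := by
  have hN : (2 : ℝ) ≤ Fintype.card α := mod_cast hα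
  have hbound := containmentBound_one hN (s := univ) (by simp) 𝒜 (by simp) ℬ (by simp)
  rw [card_univ, one_mul, h] at hbound
  rw [h]
  set N : ℝ := (Fintype.card α : ℝ)
  set δ := logb N 2 * (1 / 300) with hδ
  set M : ℝ := 2 ^ Fintype.card α
  calc (containments 𝒜 ℬ : ℝ) ≤ M ^ δ * (N ^ d * M) ^ (1 - δ) := hbound
    _ = (N ^ d) ^ (-δ) * (N ^ d * M) :=
        rpow_mul_mul_rpow_one_sub (by positivity) (by positivity) δ
    _ = N ^ (logb N 2 * (-d / 300)) * (N ^ d * M) := by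
        rw [← rpow_mul (by positivity), hδ]
        ring_nf
    _ = 2 ^ (-d / 300) * (N ^ d * M) := by rw [rpow_logb_two_mul (by linarith)]

end Containments

theorem stmt0 (n : ℕ) (hn : 2 ≤ n) (d : ℝ) (𝒜 ℬ : Finset (Finset (Fin n)))
    (h : (𝒜.card : ℝ) * ℬ.card = (n : ℝ) ^ d * 2 ^ n) :
    (crossComp 𝒜 ℬ : ℝ) ≤ (2 : ℝ) ^ (-d / 300) * ((𝒜.card : ℝ) * ℬ.card) :=
  le_trans (mod_cast crossComp_le_containments 𝒜 ℬ)
    (stmt0_general (by simpa using hn) d 𝒜 ℬ (by simpa using h))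
end

section
/- For every positive integer k there exist positive constants β = β(k) and C = C(k) such that the following holds for every n and every real δ > 0: if ℱ is a family of m subsets of [n] with m = 2^{(1/(k+1) + δ)n}, then c(ℱ) ≤ (1 − 1/k)·binom(m,2) + C·m^{2 − βδ^{k+1}}. -/
open Finset

/-- `compCount ℱ` is the number of comparable pairs in `ℱ`, i.e. the number of unordered
pairs `{A, B}` of distinct sets in `ℱ` with `A ⊆ B` or `B ⊆ A`. -/
def compCount {n : ℕ} (ℱ : Finset (Finset (Fin n))) : ℕ := crossComp ℱ ℱ

/-!
Let `R` be the comparability relation on `ℱ`, and measure `r`-cliques of `R` by their density among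
all ordered `r`-tuples. By the Moon–Moser inequality the edge density exceeds `1 - 1/k` by `η ≥ 0`
only if `(k+1)`-cliques have density at least `η ^ k`, so it is enough to bound the density `c` of
chains of `d = k + 1` sets. By Jensen's inequality, applied one coordinate at a time, `d` random
`t`-tuples of members of `ℱ` lie entirely one above another with probability at least `c ^ (t ^ d)`.
The spreads (union minus intersection) of such tuples are disjoint, hence one of them has at most
`n / d` elements; but at most `2 ^ (n / d * t) * 4 ^ n` tuples have so small a spread, a proportion
of at most `2 ^ (-n)` once `3 ≤ δ * t`. Taking `t` of order `1 / δ` yields the exponent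
`δ ^ (k + 1)`.
-/

section

open Function Relation
open scoped BigOperators Classical

section Expect

variable {ι V : Type*} [Fintype ι] [Fintype V]

lemma pow_expect_le_expect_pow [Nonempty ι] {f : ι → ℝ} (hf : ∀ i, 0 ≤ f i) (n : ℕ) :
    (𝔼 i, f i) ^ n ≤ 𝔼 i, f i ^ n := by
  have hι : (Fintype.card ι : ℝ) ≠ 0 := by simp
  simpa only [Fintype.expect_eq_sum_div_card, sum_div, inv_mul_eq_div] using
    Real.pow_arith_mean_le_arith_mean_pow univ (fun _ ↦ (Fintype.card ι : ℝ)⁻¹) f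
      (fun _ _ ↦ by positivity) (by simp [hι]) (fun i _ ↦ hf i) n

lemma expect_fin_insertNth {r : ℕ} (i : Fin (r + 1)) (g : (Fin (r + 1) → V) → ℝ) :
    𝔼 f, g f = 𝔼 x : V, 𝔼 T : Fin r → V, g (i.insertNth (α := fun _ ↦ V) x T) := by
  rw [← expect_product', univ_product_univ]
  exact (Fintype.expect_equiv (Fin.insertNthEquiv (fun _ ↦ V) i) _ _ fun _ ↦ rfl).symm

lemma expect_fin_cons {r : ℕ} (g : (Fin (r + 1) → V) → ℝ) :
    𝔼 f, g f = 𝔼 x : V, 𝔼 T : Fin r → V, g (Fin.cons x T) := by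
  simpa only [Fin.insertNth_zero'] using expect_fin_insertNth 0 g

lemma expect_eval [Nonempty V] {r : ℕ} (i : Fin r) (g : V → ℝ) :
    𝔼 f : Fin r → V, g (f i) = 𝔼 x, g x := by
  obtain ⟨r, rfl⟩ := Nat.exists_eq_succ_of_ne_zero i.pos.ne'
  simp only [expect_fin_insertNth i, Fin.insertNth_apply_same, Fintype.expect_const]

lemma prod_fin_cons {M : Type*} [CommMonoid M] {r : ℕ} (g : (Fin (r + 1) → V) → M) :
    ∏ f, g f = ∏ T : Fin r → V, ∏ x, g (Fin.cons x T) := by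
  rw [← (Fin.consEquiv fun _ ↦ V).prod_comp, Fintype.prod_prod_type, prod_comm]
  rfl

lemma pow_expect_le_expect_prod_blowup [Nonempty V] (t : ℕ) {d : ℕ} {f : (Fin d → V) → ℝ}
    (hf : ∀ x, 0 ≤ f x) :
    (𝔼 x, f x) ^ t ^ d ≤ 𝔼 F : Fin d → Fin t → V, ∏ φ : Fin d → Fin t, f fun i ↦ F i (φ i) := by
  induction d with
  | zero =>
    refine le_of_eq ?_
    simp [Subsingleton.elim _ (default : Fin 0 → V)]
  | succ d ih =>
    let g (x : Fin t → V) (y : Fin d → V) : ℝ := ∏ j, f (Fin.cons (x j) y)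
    have hg x y : 0 ≤ g x y := prod_nonneg fun j _ ↦ hf _
    have first_coordinate : (𝔼 x, f x) ^ t ≤ 𝔼 x, 𝔼 y, g x y := by
      calc (𝔼 x, f x) ^ t = (𝔼 y : Fin d → V, 𝔼 v, f (Fin.cons v y)) ^ t := by
            rw [expect_fin_cons, expect_comm]
        _ ≤ 𝔼 y : Fin d → V, (𝔼 v, f (Fin.cons v y)) ^ t :=
            pow_expect_le_expect_pow (fun y ↦ expect_nonneg fun v _ ↦ hf _) t
        _ = 𝔼 x, 𝔼 y, g x y := by
            simp only [expect_pow, Fintype.piFinset_univ]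
            exact expect_comm _ _ _
    have split_blowup (x : Fin t → V) (G : Fin d → Fin t → V) :
        ∏ φ : Fin (d + 1) → Fin t, f (fun i ↦ (Fin.cons x G : Fin (d + 1) → Fin t → V) i (φ i)) =
          ∏ ψ : Fin d → Fin t, g x fun i ↦ G i (ψ i) := by
      rw [prod_fin_cons]
      refine prod_congr rfl fun ψ _ ↦ prod_congr rfl fun j _ ↦ congrArg f (funext fun i ↦ ?_)
      cases i using Fin.cases <;> rfl
    calc (𝔼 x, f x) ^ t ^ (d + 1) = ((𝔼 x, f x) ^ t) ^ t ^ d := by rw [← pow_mul, pow_succ']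
      _ ≤ (𝔼 x, 𝔼 y, g x y) ^ t ^ d :=
          pow_le_pow_left₀ (pow_nonneg (expect_nonneg fun x _ ↦ hf x) t) first_coordinate _
      _ ≤ 𝔼 x, (𝔼 y, g x y) ^ t ^ d :=
          pow_expect_le_expect_pow (fun x ↦ expect_nonneg fun y _ ↦ hg x y) _
      _ ≤ 𝔼 x, 𝔼 G : Fin d → Fin t → V, ∏ ψ : Fin d → Fin t, g x fun i ↦ G i (ψ i) :=
          expect_le_expect fun x _ ↦ ih (hg x)
      _ = _ := by simp only [expect_fin_cons (V := Fin t → V), split_blowup]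

end Expect

section CliqueDensity

lemma pairwise_on_insertNth_iff {V : Type*} {R : V → V → Prop} [Std.Symm R] {r : ℕ}
    (i : Fin (r + 1)) (x : V) (T : Fin r → V) :
    Pairwise (R on (i.insertNth (α := fun _ ↦ V) x T)) ↔
      Pairwise (R on T) ∧ ∀ j, R (T j) x := by
  simp only [Pairwise, onFun, Fin.forall_iff_succAbove i, Fin.insertNth_apply_same,
    Fin.insertNth_apply_succAbove, ne_eq, not_true_eq_false, Fin.succAbove_ne, Fin.ne_succAbove,
    not_false_eq_true, Fin.succAbove_right_inj, false_imp_iff, true_imp_iff, true_and,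
    forall_and, comm (r := R) (a := x)]
  tauto

lemma sum_ite_forall_ne_le {r : ℕ} (p : Fin (r + 1) → Prop) :
    ∑ i, (if ∀ j ≠ i, p j then (1 : ℝ) else 0) ≤ 1 + r * if ∀ j, p j then 1 else 0 := by
  by_cases hp : ∀ j, p j
  · simp [hp, add_comm]
  · obtain ⟨j, hj⟩ := not_forall.1 hp
    have h_only (i : Fin (r + 1)) (hi : ∀ l ≠ i, p l) : i = j := by
      by_contra hne
      exact hj (hi j (Ne.symm hne))
    have : ∀ i, (if ∀ l ≠ i, p l then (1 : ℝ) else 0) ≤ if i = j then 1 else 0 := fun i ↦ by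
      split_ifs <;> simp_all
    simpa [hp] using sum_le_sum fun i (_ : i ∈ univ) ↦ this i

variable {V : Type*} [Fintype V] (R : V → V → Prop)

/-- The probability that a uniformly random `r`-tuple of vertices (ordered, repetitions allowed) is
a clique of `R`; for irreflexive `R` only injective tuples count, so this is `r!` times the number
of `r`-cliques, divided by `|V| ^ r`. -/
noncomputable def cliqueDensity (r : ℕ) : ℝ :=
  𝔼 f : Fin r → V, if Pairwise (R on f) then 1 else 0

/-- The probability that a uniformly random vertex is related to every entry of `T`; it counts the
extensions of a clique `T` by one vertex. -/
noncomputable def commonNeighborDensity {r : ℕ} (T : Fin r → V) : ℝ :=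
  𝔼 y, if ∀ j, R (T j) y then 1 else 0

variable {R}

lemma cliqueDensity_nonneg (r : ℕ) : 0 ≤ cliqueDensity R r :=
  expect_nonneg fun _ _ ↦ by split_ifs <;> norm_num

lemma cliqueDensity_one [Nonempty V] : cliqueDensity R 1 = 1 := by
  simp [cliqueDensity, Subsingleton.pairwise]

variable [Std.Symm R]

lemma cliqueDensity_succ (r : ℕ) :
    cliqueDensity R (r + 1) =
      𝔼 T : Fin r → V, (if Pairwise (R on T) then 1 else 0) * commonNeighborDensity R T := by
  rw [cliqueDensity, expect_fin_insertNth 0, expect_comm]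
  refine expect_congr rfl fun T _ ↦ ?_
  simp only [pairwise_on_insertNth_iff, commonNeighborDensity, mul_expect, ite_and, ite_mul,
    one_mul, zero_mul]

lemma sq_cliqueDensity_succ_le (r : ℕ) :
    cliqueDensity R (r + 1) ^ 2 ≤ cliqueDensity R r * 𝔼 T : Fin r → V,
      (if Pairwise (R on T) then 1 else 0) * commonNeighborDensity R T ^ 2 := by
  have cauchy_schwarz := expect_mul_sq_le_sq_mul_sq univ
    (fun T : Fin r → V ↦ if Pairwise (R on T) then (1 : ℝ) else 0)
    (fun T ↦ (if Pairwise (R on T) then 1 else 0) * commonNeighborDensity R T)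
  rw [cliqueDensity_succ, cliqueDensity]
  simpa only [mul_pow, ite_pow, one_pow, ne_eq, OfNat.ofNat_ne_zero, not_false_eq_true, zero_pow,
    ← mul_assoc, ite_mul, one_mul, zero_mul, ← ite_and, and_self] using cauchy_schwarz

lemma expect_mul_commonNeighborDensity_sq {r : ℕ} (i : Fin (r + 1)) :
    𝔼 T : Fin r → V, (if Pairwise (R on T) then 1 else 0) * commonNeighborDensity R T ^ 2 =
      𝔼 K : Fin (r + 1) → V, (if Pairwise (R on K) then 1 else 0) *
        𝔼 y, if ∀ j ≠ i, R (K j) y then (1 : ℝ) else 0 := by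
  rw [expect_fin_insertNth i, expect_comm]
  refine expect_congr rfl fun T _ ↦ ?_
  simp only [pairwise_on_insertNth_iff, Fin.forall_iff_succAbove i, Fin.insertNth_apply_succAbove,
    ne_eq, not_true_eq_false, false_imp_iff, true_and, Fin.succAbove_ne, not_false_eq_true,
    true_imp_iff, commonNeighborDensity, ite_and, ite_mul, one_mul, zero_mul]
  split_ifs with hT
  · rw [sq, expect_mul_expect]
    refine expect_congr rfl fun x _ ↦ ?_
    split_ifs <;> simp
  · simp

lemma succ_mul_expect_commonNeighborDensity_sq_le [Nonempty V] (r : ℕ) :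
    (r + 1 : ℝ) * (𝔼 T : Fin r → V,
        (if Pairwise (R on T) then 1 else 0) * commonNeighborDensity R T ^ 2) ≤
      cliqueDensity R (r + 1) + r * cliqueDensity R (r + 2) := by
  have pointwise (K : Fin (r + 1) → V) :
      ∑ i, (𝔼 y, if ∀ j ≠ i, R (K j) y then (1 : ℝ) else 0) ≤
        1 + r * commonNeighborDensity R K := by
    calc ∑ i, (𝔼 y, if ∀ j ≠ i, R (K j) y then (1 : ℝ) else 0)
      _ = 𝔼 y, ∑ i, if ∀ j ≠ i, R (K j) y then (1 : ℝ) else 0 := (expect_sum_comm ..).symm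
      _ ≤ 𝔼 y, (1 + r * if ∀ j, R (K j) y then (1 : ℝ) else 0) :=
          expect_le_expect fun y _ ↦ sum_ite_forall_ne_le _
      _ = 1 + r * commonNeighborDensity R K := by
          rw [expect_add_distrib, Fintype.expect_const, ← mul_expect, commonNeighborDensity]
  calc (r + 1 : ℝ) * (𝔼 T : Fin r → V,
        (if Pairwise (R on T) then 1 else 0) * commonNeighborDensity R T ^ 2)
    _ = ∑ i : Fin (r + 1), 𝔼 K : Fin (r + 1) → V, (if Pairwise (R on K) then 1 else 0) *
          𝔼 y, if ∀ j ≠ i, R (K j) y then (1 : ℝ) else 0 := by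
        simp only [← expect_mul_commonNeighborDensity_sq, sum_const, card_univ, Fintype.card_fin,
          nsmul_eq_mul, Nat.cast_add_one]
    _ = 𝔼 K : Fin (r + 1) → V, (if Pairwise (R on K) then 1 else 0) *
          ∑ i, 𝔼 y, if ∀ j ≠ i, R (K j) y then (1 : ℝ) else 0 := by
        simp only [mul_sum, expect_sum_comm]
    _ ≤ 𝔼 K : Fin (r + 1) → V, (if Pairwise (R on K) then 1 else 0) *
          (1 + r * commonNeighborDensity R K) := by
        gcongr with K
        exact pointwise K
    _ = cliqueDensity R (r + 1) + r * cliqueDensity R (r + 2) := by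
        rw [cliqueDensity_succ (r + 1), cliqueDensity, mul_expect, ← expect_add_distrib]
        exact expect_congr rfl fun K _ ↦ by ring

/-- The Moon–Moser inequality. -/
theorem succ_mul_sq_cliqueDensity_succ_le [Nonempty V] (r : ℕ) :
    (r + 1) * cliqueDensity R (r + 1) ^ 2 ≤
      cliqueDensity R r * (cliqueDensity R (r + 1) + r * cliqueDensity R (r + 2)) := by
  have hr : 0 ≤ cliqueDensity R r := cliqueDensity_nonneg r
  calc (r + 1) * cliqueDensity R (r + 1) ^ 2
    _ ≤ (r + 1) * (cliqueDensity R r * 𝔼 T : Fin r → V,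
          (if Pairwise (R on T) then 1 else 0) * commonNeighborDensity R T ^ 2) := by
        gcongr
        exact sq_cliqueDensity_succ_le r
    _ = cliqueDensity R r * ((r + 1) * 𝔼 T : Fin r → V,
          (if Pairwise (R on T) then 1 else 0) * commonNeighborDensity R T ^ 2) := by ring
    _ ≤ _ := by
        gcongr
        exact succ_mul_expect_commonNeighborDensity_sq_le r

lemma mul_cliqueDensity_succ_le [Nonempty V] (r : ℕ) :
    (1 - (r + 1) * (1 - cliqueDensity R 2)) * cliqueDensity R (r + 1) ≤
      cliqueDensity R (r + 2) := by
  induction r with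
  | zero => simp [cliqueDensity_one]
  | succ r ih =>
    have moon_moser := succ_mul_sq_cliqueDensity_succ_le (R := R) (r + 1)
    push_cast at moon_moser ⊢
    obtain h_zero | h_pos := (cliqueDensity_nonneg (R := R) (r + 2)).eq_or_lt
    · simpa [← h_zero] using cliqueDensity_nonneg (R := R) (r + 3)
    have h_pos' : 0 < cliqueDensity R (r + 1) := by
      refine (cliqueDensity_nonneg _).lt_of_ne' fun h ↦ ?_
      rw [h, zero_mul] at moon_moser
      exact moon_moser.not_gt (by positivity)
    refine le_of_mul_le_mul_left ?_ (mul_pos h_pos' r.cast_add_one_pos)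
    calc cliqueDensity R (r + 1) * (r + 1) *
          ((1 - (r + 1 + 1) * (1 - cliqueDensity R 2)) * cliqueDensity R (r + 2))
      _ = (r + 1 + 1) * cliqueDensity R (r + 2) *
            ((1 - (r + 1) * (1 - cliqueDensity R 2)) * cliqueDensity R (r + 1)) -
          cliqueDensity R (r + 1) * cliqueDensity R (r + 2) := by ring
      _ ≤ (r + 1 + 1) * cliqueDensity R (r + 2) * cliqueDensity R (r + 2) -
          cliqueDensity R (r + 1) * cliqueDensity R (r + 2) := by gcongr
      _ ≤ cliqueDensity R (r + 1) * (r + 1) * cliqueDensity R (r + 3) := by linarith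

theorem pow_le_cliqueDensity_succ [Nonempty V] {k : ℕ} {η : ℝ} (hη : 0 ≤ η)
    (h : 1 - 1 / k + η ≤ cliqueDensity R 2) {r : ℕ} (hr : r ≤ k) :
    η ^ r ≤ cliqueDensity R (r + 1) := by
  induction r with
  | zero => simp [cliqueDensity_one]
  | succ r ih =>
    have hk : (0 : ℝ) < k := by exact_mod_cast r.succ_pos.trans_le hr
    have div_le_one : ((r : ℝ) + 1) / k ≤ 1 := by
      rw [div_le_one hk]
      exact_mod_cast hr
    have ratio_ge : η ≤ 1 - (r + 1) * (1 - cliqueDensity R 2) := by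
      rw [le_sub_comm]
      calc (r + 1) * (1 - cliqueDensity R 2)
        _ ≤ (r + 1) * (1 / k - η) := by
            gcongr _ * ?_
            linarith
        _ = (r + 1) / k - η - r * η := by ring
        _ ≤ 1 - η := by linarith [mul_nonneg r.cast_nonneg hη]
    calc η ^ (r + 1) = η * η ^ r := pow_succ' η r
      _ ≤ (1 - (r + 1) * (1 - cliqueDensity R 2)) * cliqueDensity R (r + 1) := by
          gcongr
          · exact hη.trans ratio_ge
          · exact ih (by lia)
      _ ≤ cliqueDensity R (r + 2) := mul_cliqueDensity_succ_le r

theorem cliqueDensity_two_le [Nonempty V] {k : ℕ} (hk : k ≠ 0) :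
    cliqueDensity R 2 ≤ 1 - 1 / k + cliqueDensity R (k + 1) ^ (1 / k : ℝ) := by
  obtain h | h := le_total (cliqueDensity R 2) (1 - 1 / k)
  · exact h.trans (le_add_of_nonneg_right (Real.rpow_nonneg (cliqueDensity_nonneg _) _))
  · rw [← sub_le_iff_le_add', ← Real.pow_rpow_inv_natCast (sub_nonneg.2 h) hk, ← one_div]
    exact Real.rpow_le_rpow (pow_nonneg (sub_nonneg.2 h) k)
      (pow_le_cliqueDensity_succ (sub_nonneg.2 h) (add_sub_cancel _ _).le le_rfl) (by positivity)

lemma cliqueDensity_two_mul_sq_card :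
    cliqueDensity R 2 * Fintype.card V ^ 2 = ∑ a, ∑ b, if R a b then 1 else 0 := by
  have pairwise_iff (f : Fin 2 → V) : Pairwise (R on f) ↔ R (f 0) (f 1) := by
    simp [Pairwise, Fin.forall_fin_two, onFun, comm (r := R) (a := f 1)]
  have card_fun : (Fintype.card V : ℝ) ^ 2 = Fintype.card (Fin 2 → V) := by simp
  rw [mul_comm, card_fun, cliqueDensity, Fintype.card_mul_expect, ← Fintype.sum_prod_type']
  exact Fintype.sum_equiv (finTwoArrowEquiv V) _ _ fun f ↦ if_congr (pairwise_iff f) rfl rfl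

end CliqueDensity

section Chains

lemma exists_perm_strictMono_comp {P : Type*} [PartialOrder P] {d : ℕ} {f : Fin d → P}
    (hf : Pairwise (SymmGen (· < ·) on f)) : ∃ σ : Equiv.Perm (Fin d), StrictMono (f ∘ σ) := by
  let σ := Tuple.sort (toLinearExtension ∘ f)
  refine ⟨σ, fun i j hij ↦ (hf (σ.injective.ne hij.ne)).resolve_right fun hji ↦ ?_⟩
  have h_le : toLinearExtension (f (σ i)) ≤ toLinearExtension (f (σ j)) :=
    Tuple.monotone_sort (toLinearExtension ∘ f) hij.le
  exact hji.ne' (h_le.antisymm (toLinearExtension.monotone hji.le))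

variable (P : Type*) [Fintype P]

/-- The probability that a uniformly random `d`-tuple of elements of `P` is strictly increasing. -/
noncomputable def chainDensity [Preorder P] (d : ℕ) : ℝ :=
  𝔼 f : Fin d → P, if StrictMono f then 1 else 0

variable {P}

lemma cliqueDensity_symmGen_lt_le [PartialOrder P] (d : ℕ) :
    cliqueDensity (SymmGen ((· < ·) : P → P → Prop)) d ≤ d.factorial * chainDensity P d := by
  have indicator_le (f : Fin d → P) :
      (if Pairwise (SymmGen (· < ·) on f) then (1 : ℝ) else 0) ≤
        ∑ σ : Equiv.Perm (Fin d), if StrictMono (f ∘ σ) then 1 else 0 := by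
    split_ifs with hf
    · obtain ⟨σ, hσ⟩ := exists_perm_strictMono_comp hf
      exact (if_pos hσ).ge.trans <| single_le_sum
        (f := fun σ : Equiv.Perm (Fin d) ↦ if StrictMono (f ∘ σ) then (1 : ℝ) else 0)
        (fun _ _ ↦ by positivity) (mem_univ σ)
    · positivity
  have permute (σ : Equiv.Perm (Fin d)) :
      (𝔼 f : Fin d → P, if StrictMono (f ∘ σ) then (1 : ℝ) else 0) = chainDensity P d :=
    Fintype.expect_equiv (σ.symm.arrowCongr (Equiv.refl P)) _ _ fun _ ↦ rfl
  calc cliqueDensity (SymmGen ((· < ·) : P → P → Prop)) d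
    _ ≤ 𝔼 f : Fin d → P, ∑ σ : Equiv.Perm (Fin d), if StrictMono (f ∘ σ) then (1 : ℝ) else 0 :=
        expect_le_expect fun f _ ↦ indicator_le f
    _ = ∑ σ : Equiv.Perm (Fin d), 𝔼 f : Fin d → P, if StrictMono (f ∘ σ) then (1 : ℝ) else 0 :=
        expect_sum_comm ..
    _ = d.factorial * chainDensity P d := by simp [permute, Fintype.card_perm]

lemma chainDensity_pow_le [Preorder P] [Nonempty P] (t d : ℕ) :
    chainDensity P d ^ t ^ d ≤ 𝔼 F : Fin d → Fin t → P,
      if ∀ φ : Fin d → Fin t, StrictMono fun i ↦ F i (φ i) then 1 else 0 := by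
  simpa only [chainDensity, Fintype.prod_boole] using
    pow_expect_le_expect_prod_blowup t
      (f := fun f : Fin d → P ↦ if StrictMono f then (1 : ℝ) else 0) fun _ ↦ by positivity

end Chains

section Spread

variable {α ι : Type*} [DecidableEq α]

lemma card_Icc_finset_le (I U : Finset α) : #(Icc I U) ≤ 2 ^ #(U \ I) := by
  by_cases h : I ⊆ U
  · rw [card_Icc_finset h, card_sdiff_of_subset h]
  · simp [Icc_eq_empty h]

variable [Fintype α] [Fintype ι]

/-- The union minus the intersection of a tuple of sets: the elements on which the sets of the tuple
disagree. For the empty tuple the intersection is the full set, so its spread is empty. -/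
def spread (x : ι → Finset α) : Finset α := univ.sup x \ univ.inf x

lemma pairwise_disjoint_spread {κ : Type*} [LinearOrder κ] {F : κ → ι → Finset α}
    (hF : ∀ i i', i < i' → ∀ j j', F i j ⊆ F i' j') :
    Pairwise (Disjoint on fun i ↦ spread (F i)) := by
  have disjoint_of_lt {i i' : κ} (hi : i < i') : Disjoint (spread (F i)) (spread (F i')) := by
    have sup_le_inf : univ.sup (F i) ≤ univ.inf (F i') :=
      Finset.sup_le fun j _ ↦ Finset.le_inf fun j' _ ↦ hF i i' hi j j'
    exact disjoint_sdiff.mono_left (sdiff_subset.trans sup_le_inf)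
  exact fun i i' hne ↦ hne.lt_or_gt.elim disjoint_of_lt fun hi ↦ (disjoint_of_lt hi).symm

lemma exists_card_spread_le {κ : Type*} [Fintype κ] [Nonempty κ] [LinearOrder κ]
    {F : κ → ι → Finset α} (hF : ∀ i i', i < i' → ∀ j j', F i j ⊆ F i' j') :
    ∃ i, #(spread (F i)) ≤ Fintype.card α / Fintype.card κ := by
  have sum_le : ∑ i, #(spread (F i)) ≤ Fintype.card α := by
    rw [← card_biUnion fun i _ i' _ hne ↦ pairwise_disjoint_spread hF hne]
    exact card_le_univ _
  by_contra! h
  have : Fintype.card κ * (Fintype.card α / Fintype.card κ + 1) ≤ Fintype.card α := by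
    simpa using (sum_le_sum fun i _ ↦ Nat.succ_le_of_lt (h i)).trans sum_le
  exact this.not_gt (Nat.lt_mul_div_succ _ Fintype.card_pos)

variable [DecidableEq ι]

lemma card_filter_inf_sup_eq_le (I U : Finset α) :
    #{x : ι → Finset α | univ.inf x = I ∧ univ.sup x = U} ≤ 2 ^ (#(U \ I) * Fintype.card ι) := by
  calc #{x : ι → Finset α | univ.inf x = I ∧ univ.sup x = U}
    _ ≤ #(Fintype.piFinset fun _ : ι ↦ Icc I U) := by
        refine card_le_card fun x hx ↦ ?_
        obtain ⟨-, rfl, rfl⟩ := mem_filter.1 hx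
        simp only [Fintype.mem_piFinset, mem_Icc]
        exact fun j ↦ ⟨inf_le (mem_univ j), le_sup (mem_univ j)⟩
    _ = #(Icc I U) ^ Fintype.card ι := by
        rw [Fintype.card_piFinset, prod_const, card_univ]
    _ ≤ 2 ^ (#(U \ I) * Fintype.card ι) := by
        rw [pow_mul]
        exact Nat.pow_le_pow_left (card_Icc_finset_le I U) _

lemma card_filter_card_spread_le (s : ℕ) :
    #{x : ι → Finset α | #(spread x) ≤ s} ≤ 2 ^ (s * Fintype.card ι) * 4 ^ Fintype.card α := by
  have card_pairs : #(univ : Finset (Finset α × Finset α)) = 4 ^ Fintype.card α := by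
    simp [← mul_pow]
  rw [← card_pairs]
  refine card_le_mul_card_image_of_maps_to (f := fun x ↦ (univ.inf x, univ.sup x))
    (fun _ _ ↦ mem_univ _) _ ?_
  rintro ⟨I, U⟩ -
  by_cases hs : #(U \ I) ≤ s
  · calc #{x ∈ {x : ι → Finset α | #(spread x) ≤ s} | (univ.inf x, univ.sup x) = (I, U)}
      _ ≤ #{x : ι → Finset α | univ.inf x = I ∧ univ.sup x = U} := by
          refine card_le_card fun x hx ↦ ?_
          simpa using (mem_filter.1 hx).2
      _ ≤ 2 ^ (#(U \ I) * Fintype.card ι) := card_filter_inf_sup_eq_le I U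
      _ ≤ 2 ^ (s * Fintype.card ι) := by gcongr; norm_num
  · refine (card_eq_zero.2 (filter_eq_empty_iff.2 fun x hx hIU ↦ hs ?_)).trans_le zero_le
    obtain ⟨rfl, rfl⟩ := Prod.mk.inj hIU
    exact (mem_filter.1 hx).2

end Spread

section SetFamilies

variable {α : Type*} [Fintype α] {ℱ : Finset (Finset α)}

lemma le_one_of_two_rpow_le_card {a δ : ℝ} (ha : 0 ≤ a) (hℱ : 1 < #ℱ)
    (h : (2 : ℝ) ^ ((a + δ) * Fintype.card α) ≤ #ℱ) : δ ≤ 1 := by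
  have card_le : #ℱ ≤ 2 ^ Fintype.card α := by simpa using card_le_univ ℱ
  have card_pos : (0 : ℝ) < Fintype.card α := by
    exact_mod_cast Nat.pos_of_ne_zero fun h₀ ↦ hℱ.not_ge (by simpa [h₀] using card_le)
  have rpow_le : (2 : ℝ) ^ ((a + δ) * Fintype.card α) ≤ 2 ^ (Fintype.card α : ℝ) :=
    h.trans (by exact_mod_cast card_le)
  rw [Real.rpow_le_rpow_left_iff one_lt_two, mul_le_iff_le_one_left card_pos] at rpow_le
  linarith

lemma two_pow_mul_eight_pow_le_card_pow {d t : ℕ} {δ : ℝ} (ht : 3 ≤ δ * t)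
    (h : (2 : ℝ) ^ ((1 / d + δ) * Fintype.card α) ≤ #ℱ) :
    (2 : ℝ) ^ (Fintype.card α / d * t) * 8 ^ Fintype.card α ≤ #ℱ ^ t := by
  set n := Fintype.card α
  have exponent_le : ((n / d * t + 3 * n : ℕ) : ℝ) ≤ (1 / d + δ) * n * t := by
    calc ((n / d * t + 3 * n : ℕ) : ℝ)
      _ = (n / d : ℕ) * t + 3 * n := by push_cast; rfl
      _ ≤ (n / d : ℝ) * t + δ * t * n := by
          gcongr
          exact Nat.cast_div_le
      _ = (1 / d + δ) * n * t := by ring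
  calc (2 : ℝ) ^ (n / d * t) * 8 ^ n
    _ = 2 ^ ((n / d * t + 3 * n : ℕ) : ℝ) := by
        rw [Real.rpow_natCast, pow_add, pow_mul 2 3]
        norm_num
    _ ≤ 2 ^ ((1 / d + δ) * n * t) := Real.rpow_le_rpow_of_exponent_le one_le_two exponent_le
    _ = (2 ^ ((1 / d + δ) * n)) ^ t := Real.rpow_mul_natCast zero_le_two _ _
    _ ≤ #ℱ ^ t := by gcongr

lemma expect_ite_card_spread_le [DecidableEq α] (t s : ℕ) :
    (𝔼 x : Fin t → ℱ, if #(spread fun j ↦ (x j : Finset α)) ≤ s then (1 : ℝ) else 0) ≤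
      2 ^ (s * t) * 4 ^ Fintype.card α / #ℱ ^ t := by
  have card_le : #{x : Fin t → ℱ | #(spread fun j ↦ (x j : Finset α)) ≤ s} ≤
      2 ^ (s * t) * 4 ^ Fintype.card α := by
    calc #{x : Fin t → ℱ | #(spread fun j ↦ (x j : Finset α)) ≤ s}
      _ ≤ #{x : Fin t → Finset α | #(spread x) ≤ s} :=
          card_le_card_of_injOn (fun x j ↦ x j) (by simp [Set.MapsTo]) fun x _ y _ hxy ↦
            funext fun j ↦ Subtype.ext (congrFun hxy j)
      _ ≤ _ := by simpa using card_filter_card_spread_le (α := α) (ι := Fin t) s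
  rw [Fintype.expect_eq_sum_div_card, sum_boole]
  simp only [Fintype.card_fun, Fintype.card_coe, Fintype.card_fin, Nat.cast_pow]
  gcongr
  exact_mod_cast card_le

lemma exists_card_spread_le_of_forall_strictMono [DecidableEq α] {t d : ℕ} [NeZero d]
    {F : Fin d → Fin t → ℱ} (hF : ∀ φ : Fin d → Fin t, StrictMono fun i ↦ F i (φ i)) :
    ∃ i, #(spread fun j ↦ (F i j : Finset α)) ≤ Fintype.card α / d := by
  have subset_of_lt (i i') (hi : i < i') (j j') : (F i j : Finset α) ⊆ F i' j' := by
    simpa [hi.ne'] using (hF (update (fun _ ↦ j') i j) hi).le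
  simpa only [Fintype.card_fin] using
    exists_card_spread_le (F := fun i j ↦ (F i j : Finset α)) subset_of_lt

lemma chainDensity_pow_le_div [Nonempty ℱ] (t d : ℕ) [NeZero d] :
    chainDensity ℱ d ^ t ^ d ≤
      d * (2 ^ (Fintype.card α / d * t) * 4 ^ Fintype.card α / #ℱ ^ t) := by
  calc chainDensity ℱ d ^ t ^ d
    _ ≤ 𝔼 F : Fin d → Fin t → ℱ, ∑ i,
          if #(spread fun j ↦ (F i j : Finset α)) ≤ Fintype.card α / d then 1 else 0 := by
        refine (chainDensity_pow_le t d).trans (expect_le_expect fun F _ ↦ ?_)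
        split_ifs with hF
        · obtain ⟨i, hi⟩ := exists_card_spread_le_of_forall_strictMono hF
          rw [sum_boole]
          exact_mod_cast card_pos.2 ⟨i, mem_filter.2 ⟨mem_univ i, hi⟩⟩
        · positivity
    _ = ∑ _i : Fin d, 𝔼 x : Fin t → ℱ,
          if #(spread fun j ↦ (x j : Finset α)) ≤ Fintype.card α / d then 1 else 0 := by
        rw [expect_sum_comm]
        exact sum_congr rfl fun i _ ↦ expect_eval i fun x : Fin t → ℱ ↦
          if #(spread fun j ↦ (x j : Finset α)) ≤ Fintype.card α / d then (1 : ℝ) else 0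
    _ ≤ ∑ _i : Fin d, (2 ^ (Fintype.card α / d * t) * 4 ^ Fintype.card α / #ℱ ^ t : ℝ) :=
        sum_le_sum fun _ _ ↦ expect_ite_card_spread_le t (Fintype.card α / d)
    _ = d * (2 ^ (Fintype.card α / d * t) * 4 ^ Fintype.card α / #ℱ ^ t) := by simp

lemma chainDensity_pow_le_div_card [Nonempty ℱ] {d t : ℕ} [NeZero d] {δ : ℝ} (ht : 3 ≤ δ * t)
    (h : (2 : ℝ) ^ ((1 / d + δ) * Fintype.card α) ≤ #ℱ) :
    chainDensity ℱ d ^ t ^ d ≤ d / #ℱ := by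
  set n := Fintype.card α
  have card_pos : (0 : ℝ) < #ℱ := lt_of_lt_of_le (by positivity) h
  have card_le : (#ℱ : ℝ) ≤ 2 ^ n := by
    exact_mod_cast (show #ℱ ≤ 2 ^ n by simpa using card_le_univ ℱ)
  refine (chainDensity_pow_le_div t d).trans ?_
  rw [div_eq_mul_one_div (d : ℝ)]
  gcongr ?_ * ?_
  rw [div_le_div_iff₀ (by positivity) card_pos, one_mul]
  calc (2 : ℝ) ^ (n / d * t) * 4 ^ n * #ℱ
    _ ≤ 2 ^ (n / d * t) * 4 ^ n * 2 ^ n := by gcongr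
    _ = 2 ^ (n / d * t) * 8 ^ n := by rw [mul_assoc, ← mul_pow]; norm_num
    _ ≤ #ℱ ^ t := two_pow_mul_eight_pow_le_card_pow ht h

theorem chainDensity_le_rpow {d : ℕ} [NeZero d] {δ : ℝ} (hδ : 0 < δ) (hδ_le : δ ≤ 1)
    (h : (2 : ℝ) ^ ((1 / d + δ) * Fintype.card α) ≤ #ℱ) :
    chainDensity ℱ d ≤ d * (#ℱ : ℝ) ^ (-(δ / 4) ^ d) := by
  have one_le_card : (1 : ℝ) ≤ #ℱ := by
    exact_mod_cast Nat.cast_pos.1 (lt_of_lt_of_le (by positivity) h)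
  have : Nonempty ℱ := Nonempty.to_subtype (card_pos.1 (by exact_mod_cast one_le_card))
  let t := ⌈3 / δ⌉₊
  have three_le : 3 ≤ δ * t := (div_le_iff₀' hδ).1 (Nat.le_ceil _)
  have mul_le : δ / 4 * t ≤ 1 := by
    have := (Nat.ceil_lt_add_one (show 0 ≤ 3 / δ by positivity)).le
    rw [div_add_one hδ.ne', le_div_iff₀' hδ] at this
    linarith
  have t_ne_zero : t ≠ 0 := by
    rintro h₀
    norm_num [h₀] at three_le
  refine le_of_pow_le_pow_left₀ (pow_ne_zero d t_ne_zero) (by positivity) ?_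
  calc chainDensity ℱ d ^ t ^ d
    _ ≤ d * (#ℱ : ℝ) ^ (-1 : ℝ) := by
        rw [Real.rpow_neg_one, ← div_eq_mul_inv]
        exact chainDensity_pow_le_div_card three_le h
    _ ≤ d ^ t ^ d * (#ℱ : ℝ) ^ (-(δ / 4 * t) ^ d) := by
        gcongr
        · exact le_self_pow₀ (by exact_mod_cast NeZero.one_le) (pow_ne_zero d t_ne_zero)
        · exact pow_le_one₀ (by positivity) mul_le
    _ = (d * (#ℱ : ℝ) ^ (-(δ / 4) ^ d)) ^ t ^ d := by
        rw [mul_pow (d : ℝ), ← Real.rpow_mul_natCast (by positivity), mul_pow (δ / 4), neg_mul,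
          Nat.cast_pow]

lemma one_le_factorial_succ_mul_succ (k : ℕ) : (1 : ℝ) ≤ (k + 1).factorial * (k + 1) := by
  exact_mod_cast Nat.mul_pos (k + 1).factorial_pos k.succ_pos

theorem cliqueDensity_two_le_of_two_rpow_le_card {k : ℕ} (hk : k ≠ 0) {δ : ℝ} (hδ : 0 < δ)
    (hδ_le : δ ≤ 1) (h : (2 : ℝ) ^ ((1 / (k + 1) + δ) * Fintype.card α) ≤ #ℱ) :
    cliqueDensity (SymmGen ((· < ·) : ℱ → ℱ → Prop)) 2 ≤
      1 - 1 / k + (k + 1).factorial * (k + 1) * (#ℱ : ℝ) ^ (-((δ / 4) ^ (k + 1) / k)) := by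
  have : Nonempty ℱ := Nonempty.to_subtype <|
    card_pos.1 <| Nat.cast_pos.1 <| lt_of_lt_of_le (by positivity) h
  have clique_le : cliqueDensity (SymmGen ((· < ·) : ℱ → ℱ → Prop)) (k + 1) ≤
      (k + 1).factorial * (k + 1) * (#ℱ : ℝ) ^ (-(δ / 4) ^ (k + 1)) := by
    refine (cliqueDensity_symmGen_lt_le (k + 1)).trans ?_
    rw [mul_assoc]
    gcongr
    exact_mod_cast chainDensity_le_rpow hδ hδ_le (by exact_mod_cast h)
  have const_rpow_le : ((k + 1).factorial * (k + 1) : ℝ) ^ (1 / k : ℝ) ≤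
      (k + 1).factorial * (k + 1) := by
    refine Real.rpow_le_self_of_one_le (one_le_factorial_succ_mul_succ k) ?_
    exact div_le_one_of_le₀ (by exact_mod_cast Nat.one_le_iff_ne_zero.2 hk) k.cast_nonneg
  refine (cliqueDensity_two_le hk).trans (add_le_add_right ?_ _)
  calc cliqueDensity (SymmGen ((· < ·) : ℱ → ℱ → Prop)) (k + 1) ^ (1 / k : ℝ)
    _ ≤ ((k + 1).factorial * (k + 1) * (#ℱ : ℝ) ^ (-(δ / 4) ^ (k + 1))) ^ (1 / k : ℝ) :=
        Real.rpow_le_rpow (cliqueDensity_nonneg _) clique_le (by positivity)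
    _ = ((k + 1).factorial * (k + 1) : ℝ) ^ (1 / k : ℝ) *
          (#ℱ : ℝ) ^ (-((δ / 4) ^ (k + 1) / k)) := by
        rw [Real.mul_rpow (by positivity) (by positivity), ← Real.rpow_mul (by positivity),
          neg_mul, mul_one_div]
    _ ≤ _ := by gcongr

end SetFamilies

section ComparablePairs

variable {n : ℕ} (ℱ : Finset (Finset (Fin n)))

lemma two_mul_compCount :
    2 * (compCount ℱ : ℝ) =
      cliqueDensity (SymmGen ((· < ·) : ℱ → ℱ → Prop)) 2 * #ℱ ^ 2 := by
  have compCount_eq : (compCount ℱ : ℝ) = ∑ A : ℱ, ∑ B : ℱ, if A < B then (1 : ℝ) else 0 := by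
    rw [compCount, crossComp, card_filter, sum_product]
    push_cast
    simp only [← sum_coe_sort ℱ]
    rfl
  have compCount_eq' : (compCount ℱ : ℝ) = ∑ A : ℱ, ∑ B : ℱ, if B < A then (1 : ℝ) else 0 :=
    compCount_eq.trans sum_comm
  rw [← Fintype.card_coe ℱ, cliqueDensity_two_mul_sq_card, two_mul]
  nth_rewrite 1 [compCount_eq]
  simp only [compCount_eq', ← sum_add_distrib]
  refine sum_congr rfl fun A _ ↦ sum_congr rfl fun B _ ↦ ?_
  by_cases h : A < B
  · simp [SymmGen, h, h.not_gt]
  · simp [SymmGen, h]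

variable {ℱ}

lemma compCount_eq_zero_of_card_le_one (h : #ℱ ≤ 1) : compCount ℱ = 0 := by
  refine card_eq_zero.2 (filter_eq_empty_iff.2 fun p hp ↦ ?_)
  rw [card_le_one.1 h p.1 (mem_product.1 hp).1 p.2 (mem_product.1 hp).2]
  exact ssubset_irrefl p.2

lemma compCount_le_of_cliqueDensity_le (hℱ : 1 ≤ #ℱ) {a C ε : ℝ} (hC : 0 ≤ C)
    (haC : a ≤ C) (hε : ε ≤ 1)
    (h : cliqueDensity (SymmGen ((· < ·) : ℱ → ℱ → Prop)) 2 ≤ a + C * (#ℱ : ℝ) ^ (-ε)) :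
    (compCount ℱ : ℝ) ≤ a * (#ℱ).choose 2 + C * (#ℱ : ℝ) ^ (2 - ε) := by
  have one_le_card : (1 : ℝ) ≤ #ℱ := by exact_mod_cast hℱ
  have card_le : (#ℱ : ℝ) ≤ #ℱ ^ (2 - ε) := Real.self_le_rpow_of_one_le one_le_card (by linarith)
  have mul_rpow_neg : (#ℱ : ℝ) ^ (-ε) * #ℱ ^ 2 = #ℱ ^ (2 - ε) := by
    rw [sub_eq_neg_add, Real.rpow_add (by positivity), Real.rpow_two]
  refine le_of_mul_le_mul_left ?_ two_pos
  calc 2 * (compCount ℱ : ℝ)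
    _ ≤ (a + C * (#ℱ : ℝ) ^ (-ε)) * #ℱ ^ 2 := by
        rw [two_mul_compCount]
        gcongr
    _ = 2 * (a * (#ℱ).choose 2) + (C * (#ℱ : ℝ) ^ (2 - ε) + a * #ℱ) := by
        rw [add_mul, mul_assoc C, mul_rpow_neg, Nat.cast_choose_two]
        ring
    _ ≤ 2 * (a * (#ℱ).choose 2) + (C * (#ℱ : ℝ) ^ (2 - ε) + C * #ℱ ^ (2 - ε)) := by gcongr
    _ = 2 * (a * (#ℱ).choose 2 + C * (#ℱ : ℝ) ^ (2 - ε)) := by ring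

end ComparablePairs

end

theorem stmt4 (k : ℕ) (hk : 0 < k) :
    ∃ β C : ℝ, 0 < β ∧ 0 < C ∧
      ∀ (n : ℕ) (δ : ℝ), 0 < δ →
        ∀ ℱ : Finset (Finset (Fin n)),
          (ℱ.card : ℝ) = 2 ^ ((1 / (k + 1 : ℝ) + δ) * n) →
          (compCount ℱ : ℝ) ≤ (1 - 1 / (k : ℝ)) * (ℱ.card.choose 2 : ℝ) +
            C * (ℱ.card : ℝ) ^ (2 - β * δ ^ (k + 1)) := by
  refine ⟨1 / (k * 4 ^ (k + 1)), (k + 1).factorial * (k + 1), by positivity, by positivity,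
    fun n δ hδ ℱ hℱ ↦ ?_⟩
  obtain hm | hm := le_or_gt #ℱ 1
  · rw [compCount_eq_zero_of_card_le_one hm, Nat.choose_eq_zero_of_lt (by lia)]
    simp only [Nat.cast_zero, mul_zero, zero_add]
    positivity
  have two_rpow_le : (2 : ℝ) ^ ((1 / (k + 1 : ℝ) + δ) * Fintype.card (Fin n)) ≤ #ℱ := by
    rw [Fintype.card_fin, hℱ]
  have hδ_le : δ ≤ 1 := le_one_of_two_rpow_le_card (by positivity) hm two_rpow_le
  have density_le := cliqueDensity_two_le_of_two_rpow_le_card hk.ne' hδ hδ_le two_rpow_le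
  have exponent_eq : (δ / 4) ^ (k + 1) / k = 1 / (k * 4 ^ (k + 1)) * δ ^ (k + 1) := by
    rw [div_pow]
    field_simp
  have exponent_le : (δ / 4) ^ (k + 1) / k ≤ 1 :=
    div_le_one_of_le₀ ((pow_le_one₀ (by positivity) (by linarith)).trans (by exact_mod_cast hk))
      k.cast_nonneg
  have const_ge : 1 - 1 / (k : ℝ) ≤ (k + 1).factorial * (k + 1) :=
    (sub_le_self 1 (by positivity)).trans (one_le_factorial_succ_mul_succ k)
  rw [← exponent_eq]
  exact compCount_le_of_cliqueDensity_le hm.le (by positivity) const_ge exponent_le density_le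
end

section
/- For every ε > 0 and every integer k ≥ 2, there is an η > 0 such that for all sufficiently large n divisible by k the following holds: if ℱ is a family of subsets of [n] of size m = |ℱ| ≥ (1 − η)·k·2^{n/k} with c(ℱ) ≥ (1 − (1+η)/k)·binom(m,2), then there exists a tower of k cubes of dimension n/k containing all but at most εm of the sets of ℱ. -/
open Finset

/-- `IsTower n k 𝒯` says that `𝒯` is a tower of `k` cubes of dimension `n/k` over `[n]`:
there is a chain `∅ = X₀ ⊆ X₁ ⊆ ⋯ ⊆ X_k = [n]` with `|X_i| = i·(n/k)` such that
`𝒯 = ⋃_{i=1}^{k} {F : X_{i-1} ⊆ F ⊆ X_i}`. -/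
def IsTower (n k : ℕ) (𝒯 : Finset (Finset (Fin n))) : Prop :=
  ∃ X : ℕ → Finset (Fin n),
    X 0 = ∅ ∧ X k = Finset.univ ∧
    (∀ i ≤ k, (X i).card = i * (n / k)) ∧
    (∀ i < k, X i ⊆ X (i + 1)) ∧
    𝒯 = Finset.univ.filter (fun F => ∃ i ∈ Finset.Icc 1 k, X (i - 1) ⊆ F ∧ F ⊆ X i)

/-!
Peel `ℱ` repeatedly: a set survives to the next stage if it properly contains at least `γ |ℱ|` sets
of the current stage. If stage `k` had size at least `γ |ℱ|`, then, descending from it, unions of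
random tuples would produce a chain cutting `[n]` into `k + 1` intervals, each with at least
`|ℱ| / 2 ^ (δ n)` members of `ℱ`, so that `|ℱ| ^ (k + 1)` would be at most about `2 ^ n`, which is
false for `|ℱ| ≥ 2 ^ (n / k)`. Hence almost every set lies in one of the first `k` layers, and a set
of one layer contains few sets of the same or later layers. Comparing with Turán's bound, the layers
have size about `|ℱ| / k` and almost every pair from distinct layers is comparable in the right
direction.

Restrict each layer to its core, the sets comparable with almost all of every other layer. A
coordinate contributes a factor other than `1` to the size of a core only if it is rare in the lower
layers and common in the upper ones. This happens for at most two layers, and when it happens for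
two of them the coordinate is nearly constant on both, so that both factors are at most `6 / 5`.
Since `(6 / 5) ^ 2 < 2` while the product of the sizes of the cores is almost `2 ^ n`, every
coordinate is free for exactly one layer, and the resulting partition of `[n]` defines the tower.
-/

section Peeling

variable {β : Type*} (r : β → β → Prop) [DecidableRel r]

lemma card_interedges_eq_sum_left (s t : Finset β) :
    #(Rel.interedges r s t) = ∑ a ∈ s, #{b ∈ t | r a b} := by
  simp only [Rel.interedges, card_filter, sum_product]

lemma card_interedges_eq_sum_right (s t : Finset β) :
    #(Rel.interedges r s t) = ∑ b ∈ t, #{a ∈ s | r a b} := by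
  simp only [Rel.interedges, card_filter, sum_product_right]

/-- The stages of peeling the finite digraph `(F, r)`: stage `0` is `F`, and stage `i + 1` consists
of the vertices of `F` with at least `c` in-neighbours in stage `i`. -/
noncomputable def peel (F : Finset β) (c : ℝ) : ℕ → Finset β
  | 0 => F
  | i + 1 => {b ∈ F | c ≤ #{a ∈ peel F c i | r a b}}

lemma peel_subset (F : Finset β) (c : ℝ) : ∀ i, peel r F c i ⊆ F
  | 0 => subset_rfl
  | _ + 1 => filter_subset _ _

lemma peel_antitone (F : Finset β) (c : ℝ) : Antitone (peel r F c) := by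
  refine antitone_nat_of_succ_le fun i => ?_
  induction i with
  | zero => exact peel_subset r F c 1
  | succ i ih =>
    refine monotone_filter_right F fun b _ hb => hb.trans ?_
    exact_mod_cast card_le_card (filter_subset_filter _ ih)

variable [DecidableEq β]

/-- The vertices removed between stages `i` and `i + 1` of the peeling. -/
noncomputable def layer (F : Finset β) (c : ℝ) (i : ℕ) : Finset β :=
  peel r F c i \ peel r F c (i + 1)

lemma layer_subset (F : Finset β) (c : ℝ) (i : ℕ) : layer r F c i ⊆ F :=
  sdiff_subset.trans (peel_subset r F c i)

lemma layer_pairwise_disjoint (F : Finset β) (c : ℝ) :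
    Pairwise (Function.onFun Disjoint (layer r F c)) := by
  refine (pairwise_disjoint_on _).2 fun i j hij => ?_
  exact disjoint_sdiff_self_left.mono_right (sdiff_subset.trans (peel_antitone r F c hij))

lemma sum_peel_add_sum_layer {M : Type*} [AddCommMonoid M] (F : Finset β) (c : ℝ) (f : β → M)
    (k : ℕ) :
    ∑ b ∈ peel r F c k, f b + ∑ i ∈ range k, ∑ b ∈ layer r F c i, f b = ∑ b ∈ F, f b := by
  induction k with
  | zero => simp [peel]
  | succ k ih =>
    rw [← ih, sum_range_succ, ← sum_sdiff (peel_antitone r F c k.le_succ), layer]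
    abel

lemma card_peel_add_sum_card_layer (F : Finset β) (c : ℝ) (k : ℕ) :
    #(peel r F c k) + ∑ i ∈ range k, #(layer r F c i) = #F := by
  simpa only [card_eq_sum_ones] using sum_peel_add_sum_layer r F c (fun _ => 1) k

lemma card_filter_le_of_mem_layer {F : Finset β} {c : ℝ} {i : ℕ} {b : β}
    (hb : b ∈ layer r F c i) :
    (#{a ∈ F | r a b} : ℝ) ≤ c + ∑ j ∈ range i, (#{a ∈ layer r F c j | r a b} : ℝ) := by
  have hsplit := sum_peel_add_sum_layer r F c (fun a => if r a b then 1 else 0) i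
  simp only [← card_filter] at hsplit
  have hfew : (#{a ∈ peel r F c i | r a b} : ℝ) < c := by
    by_contra! hmany
    obtain ⟨hin, hout⟩ := mem_sdiff.1 hb
    exact hout (mem_filter.2 ⟨peel_subset r F c i hin, hmany⟩)
  rw [← hsplit]
  push_cast
  gcongr

lemma card_interedges_self_le (F : Finset β) {c : ℝ} (hc : 0 ≤ c) (k : ℕ) :
    (#(Rel.interedges r F F) : ℝ) ≤ (#(peel r F c k) + c) * #F +
      ∑ i ∈ range k, ∑ j ∈ range i,
        (#(Rel.interedges r (layer r F c j) (layer r F c i)) : ℝ) := by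
  have hpeel : ∑ b ∈ peel r F c k, (#{a ∈ F | r a b} : ℝ) ≤ #(peel r F c k) * #F := by
    rw [← nsmul_eq_mul]
    exact sum_le_card_nsmul _ _ _ fun b _ => by exact_mod_cast card_filter_le _ _
  have hlayer (i : ℕ) : ∑ b ∈ layer r F c i, (#{a ∈ F | r a b} : ℝ) ≤ #(layer r F c i) * c +
      ∑ j ∈ range i, (#(Rel.interedges r (layer r F c j) (layer r F c i)) : ℝ) := by
    refine (sum_le_sum fun b => card_filter_le_of_mem_layer r).trans_eq ?_
    simp only [sum_add_distrib, sum_const, nsmul_eq_mul, card_interedges_eq_sum_right,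
      Nat.cast_sum]
    rw [sum_comm]
  have hcard : ∑ i ∈ range k, (#(layer r F c i) : ℝ) ≤ #F := by
    have := card_peel_add_sum_card_layer r F c k
    exact_mod_cast (by lia : ∑ i ∈ range k, #(layer r F c i) ≤ #F)
  calc (#(Rel.interedges r F F) : ℝ) = ∑ b ∈ F, (#{a ∈ F | r a b} : ℝ) := by
        rw [card_interedges_eq_sum_right, Nat.cast_sum]
    _ = ∑ b ∈ peel r F c k, (#{a ∈ F | r a b} : ℝ) +
          ∑ i ∈ range k, ∑ b ∈ layer r F c i, (#{a ∈ F | r a b} : ℝ) :=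
        (sum_peel_add_sum_layer r F c _ k).symm
    _ ≤ #(peel r F c k) * #F + ∑ i ∈ range k, (#(layer r F c i) * c +
          ∑ j ∈ range i, (#(Rel.interedges r (layer r F c j) (layer r F c i)) : ℝ)) :=
        add_le_add hpeel (sum_le_sum fun i _ => hlayer i)
    _ ≤ _ := by
        rw [sum_add_distrib, ← sum_mul, add_mul, mul_comm c]
        linarith [mul_le_mul_of_nonneg_right hcard hc]

end Peeling

section Stability

lemma two_mul_sum_sum_mul_add_sum_sq {R : Type*} [CommRing R] (v : ℕ → R) (k : ℕ) :
    2 * ∑ i ∈ range k, ∑ j ∈ range i, v j * v i + ∑ i ∈ range k, v i ^ 2 =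
      (∑ i ∈ range k, v i) ^ 2 := by
  induction k with
  | zero => simp
  | succ k ih =>
    simp only [sum_range_succ, add_sq, ← ih, ← sum_mul]
    ring

lemma sum_sq_sub_mean {K : Type*} [Field K] [CharZero K] (v : ℕ → K) (k : ℕ) :
    ∑ i ∈ range k, (v i - (∑ j ∈ range k, v j) / k) ^ 2 =
      ∑ i ∈ range k, v i ^ 2 - (∑ i ∈ range k, v i) ^ 2 / k := by
  rcases eq_or_ne k 0 with rfl | hk
  · simp
  have hk' : (k : K) ≠ 0 := Nat.cast_ne_zero.2 hk
  simp only [sub_sq, sum_add_distrib, sum_sub_distrib, ← mul_sum, ← sum_mul, sum_const, card_range,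
    nsmul_eq_mul]
  field_simp
  ring

variable {β : Type*} (r : β → β → Prop) [DecidableRel r] [DecidableEq β]

/-- The mean size of the first `k` layers of the peeling. -/
noncomputable def meanLayerCard (F : Finset β) (c : ℝ) (k : ℕ) : ℝ :=
  (∑ i ∈ range k, (#(layer r F c i) : ℝ)) / k

/-- The number of pairs from distinct layers among the first `k` that are not edges in the direction
prescribed by the order of the layers. -/
noncomputable def crossDefect (F : Finset β) (c : ℝ) (k : ℕ) : ℕ :=
  ∑ i ∈ range k, ∑ j ∈ range i,
    #(Rel.interedges (fun a b => ¬ r a b) (layer r F c j) (layer r F c i))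

lemma sum_card_interedges_layer (F : Finset β) (c : ℝ) (k : ℕ) :
    ∑ i ∈ range k, ∑ j ∈ range i, (#(Rel.interedges r (layer r F c j) (layer r F c i)) : ℝ) +
      crossDefect r F c k +
      (∑ i ∈ range k, ((#(layer r F c i) : ℝ) - meanLayerCard r F c k) ^ 2) / 2 =
    (1 - 1 / k) * (∑ i ∈ range k, (#(layer r F c i) : ℝ)) ^ 2 / 2 := by
  have hsplit : ∑ i ∈ range k, ∑ j ∈ range i,
        (#(Rel.interedges r (layer r F c j) (layer r F c i)) : ℝ) + crossDefect r F c k =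
      ∑ i ∈ range k, ∑ j ∈ range i, (#(layer r F c j) : ℝ) * #(layer r F c i) := by
    simp only [crossDefect, Nat.cast_sum, ← sum_add_distrib]
    refine sum_congr rfl fun i _ => sum_congr rfl fun j _ => ?_
    exact_mod_cast Rel.card_interedges_add_card_interedges_compl r _ _
  have hsq := two_mul_sum_sum_mul_add_sum_sq (fun i => (#(layer r F c i) : ℝ)) k
  rw [hsplit, meanLayerCard, sum_sq_sub_mean, ← hsq]
  ring

lemma card_interedges_layer_le_crossDefect (F : Finset β) (c : ℝ) {i j k : ℕ} (hij : i < j)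
    (hjk : j < k) :
    #(Rel.interedges (fun a b => ¬ r a b) (layer r F c i) (layer r F c j)) ≤
      crossDefect r F c k :=
  (single_le_sum_of_canonicallyOrdered (mem_range.2 hij)).trans
    (single_le_sum_of_canonicallyOrdered (f := fun j => ∑ i ∈ range j,
      #(Rel.interedges (fun a b => ¬ r a b) (layer r F c i) (layer r F c j))) (mem_range.2 hjk))

lemma crossDefect_add_variance_le (F : Finset β) {γ η : ℝ} {k : ℕ} (hη : 0 ≤ η)
    (hF : 1 ≤ γ * #F) (hpeel : #(peel r F (γ * #F) k) ≤ γ * #F)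
    (hedges : (1 - (1 + η) / k) * ((#F).choose 2 : ℝ) ≤ #(Rel.interedges r F F)) :
    crossDefect r F (γ * #F) k +
      (∑ i ∈ range k, ((#(layer r F (γ * #F) i) : ℝ) - meanLayerCard r F (γ * #F) k) ^ 2) / 2 ≤
    (3 * γ + η) * #F ^ 2 := by
  have hupper := card_interedges_self_le r F (zero_le_one.trans hF) k
  have hsum := sum_card_interedges_layer r F (γ * #F) k
  have hinv : 1 / (k : ℝ) ≤ 1 := one_div (k : ℝ) ▸ Nat.cast_inv_le_one k
  have hcard : (∑ i ∈ range k, (#(layer r F (γ * #F) i) : ℝ)) ^ 2 ≤ (#F : ℝ) ^ 2 := by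
    have := card_peel_add_sum_card_layer r F (γ * #F) k
    exact_mod_cast pow_le_pow_left₀ zero_le (by lia) 2
  have hmain := mul_le_mul_of_nonneg_left hcard (sub_nonneg.2 hinv)
  have hmul := mul_le_mul_of_nonneg_right hpeel (#F).cast_nonneg (α := ℝ)
  have hlin : (#F : ℝ) ≤ γ * #F ^ 2 := by nlinarith [(#F).cast_nonneg (α := ℝ)]
  rw [Nat.cast_choose_two, ← mul_one_div (1 + η)] at hedges
  have hη' : η * (1 / k) * (#F : ℝ) ^ 2 ≤ η * #F ^ 2 := by
    gcongr
    exact mul_le_of_le_one_right hη hinv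
  have : 0 ≤ (1 + η) * (1 / k) * (#F : ℝ) := by positivity
  have : 0 ≤ η * (#F : ℝ) ^ 2 := by positivity
  linarith

end Stability

section UnionChain

variable {α : Type*} [DecidableEq α]

lemma card_filter_biUnion_subset (𝒜 : Finset (Finset α)) (t : ℕ) (U : Finset α) :
    #{p ∈ Fintype.piFinset fun _ : Fin t => 𝒜 | univ.biUnion p ⊆ U} = #{A ∈ 𝒜 | A ⊆ U} ^ t := by
  have : {p ∈ Fintype.piFinset fun _ : Fin t => 𝒜 | univ.biUnion p ⊆ U} =
      Fintype.piFinset fun _ : Fin t => {A ∈ 𝒜 | A ⊆ U} := by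
    ext p
    simp [Fintype.mem_piFinset, forall_and]
  rw [this, Fintype.card_piFinset_const]

lemma card_filter_superset_mul_two_pow_le {𝒮 : Finset (Finset α)} {W : Finset α}
    (hW : ∀ B ∈ 𝒮, B ⊆ W) (U : Finset α) : #{B ∈ 𝒮 | U ⊆ B} * 2 ^ #U ≤ 2 ^ #W := by
  by_cases hUW : U ⊆ W
  · have hinterval : {B ∈ 𝒮 | U ⊆ B} ⊆ Icc U W := fun B hB =>
      mem_Icc.2 ⟨(mem_filter.1 hB).2, hW B (mem_filter.1 hB).1⟩
    calc #{B ∈ 𝒮 | U ⊆ B} * 2 ^ #U ≤ 2 ^ (#W - #U) * 2 ^ #U := by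
          gcongr
          exact (card_le_card hinterval).trans_eq (card_Icc_finset hUW)
      _ = 2 ^ #W := pow_sub_mul_pow 2 (card_le_card hUW)
  · rw [filter_false_of_mem fun B hB hUB => hUW (hUB.trans (hW B hB))]
    simp

lemma card_mul_pow_le_sum_card_biUnion_subset {𝒜 𝒮 : Finset (Finset α)} {c : ℝ} (hc : 0 ≤ c)
    (h𝒮 : ∀ B ∈ 𝒮, c ≤ #{A ∈ 𝒜 | A ⊂ B}) (t : ℕ) :
    #𝒮 * c ^ t ≤
      ∑ p ∈ Fintype.piFinset fun _ : Fin t => 𝒜, (#{B ∈ 𝒮 | univ.biUnion p ⊆ B} : ℝ) := by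
  have hcount := sum_card_bipartiteAbove_eq_sum_card_bipartiteBelow
    (s := Fintype.piFinset fun _ : Fin t => 𝒜) (t := 𝒮) (fun p B => univ.biUnion p ⊆ B)
  simp only [bipartiteAbove, bipartiteBelow, card_filter_biUnion_subset] at hcount
  rw [← Nat.cast_sum, hcount, ← nsmul_eq_mul, Nat.cast_sum]
  refine card_nsmul_le_sum _ _ _ fun B hB => ?_
  push_cast
  refine pow_le_pow_left₀ hc ((h𝒮 B hB).trans ?_) t
  have : {A ∈ 𝒜 | A ⊂ B} ⊆ {A ∈ 𝒜 | A ⊆ B} :=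
    monotone_filter_right 𝒜 fun A _ (hA : A ⊂ B) => hA.subset
  exact_mod_cast card_le_card this

variable [Fintype α]

lemma card_filter_biUnion_sparse_le (𝒜 : Finset (Finset α)) (t : ℕ) {a : ℝ} (ha : 0 ≤ a) :
    (#{p ∈ Fintype.piFinset fun _ : Fin t => 𝒜 | #{A ∈ 𝒜 | A ⊆ univ.biUnion p} < a} : ℝ) ≤
      2 ^ Fintype.card α * a ^ t := by
  set sparse : Finset (Finset α) := {U | #{A ∈ 𝒜 | A ⊆ U} < a} with hsparse
  have hcover : {p ∈ Fintype.piFinset fun _ : Fin t => 𝒜 | #{A ∈ 𝒜 | A ⊆ univ.biUnion p} < a} ⊆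
      sparse.biUnion fun U =>
        {p ∈ Fintype.piFinset fun _ : Fin t => 𝒜 | univ.biUnion p ⊆ U} := fun p hp =>
    mem_biUnion.2 ⟨univ.biUnion p, by simpa [hsparse] using (mem_filter.1 hp).2,
      mem_filter.2 ⟨(mem_filter.1 hp).1, subset_rfl⟩⟩
  calc _ ≤ ∑ U ∈ sparse, (#{A ∈ 𝒜 | A ⊆ U} : ℝ) ^ t := by
        exact_mod_cast (card_le_card hcover).trans
          (card_biUnion_le.trans_eq (sum_congr rfl fun U _ => card_filter_biUnion_subset 𝒜 t U))
    _ ≤ #sparse * a ^ t := by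
        rw [← nsmul_eq_mul]
        exact sum_le_card_nsmul _ _ _ fun U hU =>
          pow_le_pow_left₀ (Nat.cast_nonneg _) (mem_filter.1 hU).2.le t
    _ ≤ 2 ^ Fintype.card α * a ^ t := by
        gcongr
        exact_mod_cast (card_le_univ sparse).trans_eq Fintype.card_finset

/- The union of a random `t`-tuple from `𝒜` is rarely one of the at most `2 ^ |α|` sets with few
subsets in `𝒜`, whereas it lies below any given `B ∈ 𝒮` with probability at least `(c / #𝒜) ^ t`. -/
lemma exists_many_subsets_and_supersets {𝒜 𝒮 : Finset (Finset α)} {a c : ℝ} {t : ℕ} (ha : 0 ≤ a)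
    (hc : 0 < c) (hac : 2 * (2 ^ Fintype.card α * a ^ t) ≤ c ^ t) (hne : 𝒮.Nonempty)
    (h𝒮 : ∀ B ∈ 𝒮, c ≤ #{A ∈ 𝒜 | A ⊂ B}) :
    ∃ U : Finset α, a ≤ #{A ∈ 𝒜 | A ⊆ U} ∧
      #𝒮 * c ^ t ≤ 2 * (#𝒜 : ℝ) ^ t * #{B ∈ 𝒮 | U ⊆ B} := by
  set Q := Fintype.piFinset fun _ : Fin t => 𝒜 with hQ
  set f : (Fin t → Finset α) → ℝ := fun p => #{B ∈ 𝒮 | univ.biUnion p ⊆ B} with hf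
  set dense : Finset (Fin t → Finset α) := {p ∈ Q | ¬ #{A ∈ 𝒜 | A ⊆ univ.biUnion p} < a}
  have htotal : #𝒮 * c ^ t ≤ ∑ p ∈ Q, f p := card_mul_pow_le_sum_card_biUnion_subset hc.le h𝒮 t
  have hsparse : ∑ p ∈ Q with #{A ∈ 𝒜 | A ⊆ univ.biUnion p} < a, f p ≤ #𝒮 * c ^ t / 2 :=
    calc _ ≤ #{p ∈ Q | #{A ∈ 𝒜 | A ⊆ univ.biUnion p} < a} * (#𝒮 : ℝ) := by
          rw [← nsmul_eq_mul]
          exact sum_le_card_nsmul _ _ _ fun p _ => Nat.cast_le.2 (card_filter_le _ _)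
      _ ≤ (2 ^ Fintype.card α * a ^ t) * #𝒮 := by
          gcongr
          exact card_filter_biUnion_sparse_le 𝒜 t ha
      _ ≤ #𝒮 * c ^ t / 2 := by
          linarith [mul_le_mul_of_nonneg_right hac (#𝒮).cast_nonneg (α := ℝ)]
  have hdense : #𝒮 * c ^ t / 2 ≤ ∑ p ∈ dense, f p := by
    linarith [sum_filter_add_sum_filter_not Q
      (fun p => (#{A ∈ 𝒜 | A ⊆ univ.biUnion p} : ℝ) < a) f]
  have hpos : 0 < #𝒮 * c ^ t / 2 := by
    have := hne.card_pos
    positivity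
  have hdense_ne : dense.Nonempty := nonempty_of_sum_ne_zero (hpos.trans_le hdense).ne'
  obtain ⟨p, hp, hmax⟩ := exists_max_image dense f hdense_ne
  refine ⟨univ.biUnion p, not_lt.1 (mem_filter.1 hp).2, ?_⟩
  have hcard : (#dense : ℝ) ≤ (#𝒜 : ℝ) ^ t := by
    have := card_filter_le Q fun p => ¬ (#{A ∈ 𝒜 | A ⊆ univ.biUnion p} : ℝ) < a
    rw [hQ, Fintype.card_piFinset_const] at this
    exact_mod_cast this
  have hsum : ∑ p ∈ dense, f p ≤ (#𝒜 : ℝ) ^ t * f p := by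
    refine (sum_le_card_nsmul _ _ _ hmax).trans ?_
    rw [nsmul_eq_mul]
    gcongr
  linarith

lemma pow_le_two_pow_card_of_subset_peel {F : Finset (Finset α)} {a b c : ℝ} {t : ℕ} (hb : 0 ≤ b)
    (ha : 0 < a) (hc : 0 < c) (hba : b ≤ a) (hac : 2 * (2 ^ Fintype.card α * a ^ t) ≤ c ^ t)
    (hbc : b * (2 * (#F : ℝ) ^ t) ≤ a * c ^ t) (i : ℕ) {W : Finset α} {𝒮 : Finset (Finset α)}
    (h𝒮 : 𝒮 ⊆ peel (· ⊂ ·) F c i) (hW : ∀ B ∈ 𝒮, B ⊆ W) (hcard : a ≤ #𝒮) :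
    b ^ (i + 1) ≤ 2 ^ #W := by
  induction i generalizing W 𝒮 with
  | zero =>
    have : #𝒮 ≤ 2 ^ #W := by
      rw [← card_powerset]
      exact card_le_card fun B hB => mem_powerset.2 (hW B hB)
    rw [zero_add, pow_one]
    exact (hba.trans hcard).trans (by exact_mod_cast this)
  | succ i ih =>
    have hne : 𝒮.Nonempty := card_pos.1 (by exact_mod_cast ha.trans_le hcard)
    obtain ⟨U, hsub, hsup⟩ := exists_many_subsets_and_supersets (𝒜 := peel (· ⊂ ·) F c i) ha.le hc
      hac hne fun B hB => (mem_filter.1 (h𝒮 hB)).2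
    have hbelow : b ^ (i + 1) ≤ 2 ^ #U :=
      ih (filter_subset _ _) (fun A hA => (mem_filter.1 hA).2) hsub
    have habove : a * c ^ t ≤ 2 * (#F : ℝ) ^ t * #{B ∈ 𝒮 | U ⊆ B} := by
      calc a * c ^ t ≤ #𝒮 * c ^ t := by gcongr
        _ ≤ _ := hsup
        _ ≤ _ := by
          gcongr
          exact peel_subset _ F c i
    have hpos : 0 < 2 * (#F : ℝ) ^ t * #{B ∈ 𝒮 | U ⊆ B} := lt_of_lt_of_le (by positivity) habove
    have hmany : b ≤ #{B ∈ 𝒮 | U ⊆ B} := by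
      refine le_of_mul_le_mul_right ?_ (pos_of_mul_pos_left hpos (Nat.cast_nonneg _))
      linarith
    calc b ^ (i + 1 + 1) = b * b ^ (i + 1) := pow_succ' b (i + 1)
      _ ≤ #{B ∈ 𝒮 | U ⊆ B} * 2 ^ #U := by gcongr
      _ ≤ 2 ^ #W := by exact_mod_cast card_filter_superset_mul_two_pow_le hW U

lemma pow_le_two_pow_card_of_le_card_peel {F : Finset (Finset α)} {g y : ℝ} {t : ℕ} (ht : t ≠ 0)
    (hg : 0 < g) (hg' : g ≤ 1) (hy : 1 ≤ y) (hyt : 2 ^ Fintype.card α ≤ y ^ t) (hF : F.Nonempty)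
    {k : ℕ} (hpeel : g * #F ≤ #(peel (· ⊂ ·) F (g * #F) k)) :
    (g ^ (t + 1) * #F / (4 * y)) ^ (k + 1) ≤ 2 ^ Fintype.card α := by
  have hba : g ^ (t + 1) * #F / (4 * y) ≤ g * #F / (2 * y) := by
    rw [div_le_div_iff₀ (by positivity) (by positivity), pow_succ]
    have : g ^ t * (g * #F * y) ≤ 1 * (g * #F * y) := by
      gcongr
      exact pow_le_one₀ hg.le hg'
    have : 0 < g * #F * y := by positivity
    linarith
  have hac : 2 * (2 ^ Fintype.card α * (g * #F / (2 * y)) ^ t) ≤ (g * #F) ^ t := by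
    have h2t : (2 : ℝ) ≤ 2 ^ t := le_self_pow₀ one_le_two ht
    rw [div_pow, mul_pow 2 y, ← mul_assoc, mul_div_assoc', div_le_iff₀ (by positivity), mul_comm]
    gcongr
  have hbc : g ^ (t + 1) * #F / (4 * y) * (2 * (#F : ℝ) ^ t) ≤ g * #F / (2 * y) * (g * #F) ^ t := by
    refine le_of_eq ?_
    field_simp
    ring
  refine pow_le_two_pow_card_of_subset_peel (by positivity) (by positivity) (by positivity) hba hac
    hbc k subset_rfl (fun B _ => subset_univ B) (le_trans ?_ hpeel)
  exact div_le_self (by positivity) (by linarith)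

/- With `y = 2 ^ (l / (2 (k + 1)))` and `C = 4 / γ ^ (t + 1)`, a large stage `k` would force
`(2 ^ l / (C y)) ^ (k + 1) ≤ 2 ^ (k l)`, that is `y ≤ C`, which bounds `l`. -/
lemma eventually_card_peel_lt {γ : ℝ} (hγ : 0 < γ) (hγ' : γ ≤ 1) {k : ℕ} (hk : k ≠ 0) :
    ∀ᶠ l : ℕ in Filter.atTop, ∀ F : Finset (Finset (Fin (k * l))), (2 : ℝ) ^ l ≤ #F →
      (#(peel (· ⊂ ·) F (γ * #F) k) : ℝ) < γ * #F := by
  set t := 2 * (k + 1) * k with ht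
  set C : ℝ := 4 / γ ^ (t + 1) with hC
  have hlarge : ∀ᶠ l : ℕ in Filter.atTop, C ^ (2 * (k + 1)) < 2 ^ l :=
    (tendsto_pow_atTop_atTop_of_one_lt one_lt_two).eventually_gt_atTop _
  filter_upwards [hlarge] with l hl F hF
  by_contra! hpeel
  set y : ℝ := 2 ^ ((l : ℝ) / (2 * (k + 1))) with hy
  have hy1 : 1 ≤ y := Real.one_le_rpow one_le_two (by positivity)
  have hyl : y ^ (2 * (k + 1)) = 2 ^ l := by
    rw [hy, ← Real.rpow_mul_natCast zero_le_two, ← Real.rpow_natCast]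
    congr 1
    push_cast
    field_simp
  have hyt : 2 ^ Fintype.card (Fin (k * l)) ≤ y ^ t := by
    rw [Fintype.card_fin, ht, pow_mul y, hyl, ← pow_mul, mul_comm]
  have hFne : F.Nonempty := card_pos.1 (Nat.cast_pos.1 ((pow_pos two_pos l).trans_le hF))
  have hbound := pow_le_two_pow_card_of_le_card_peel (by positivity) hγ hγ' hy1 hyt hFne hpeel
  rw [Fintype.card_fin] at hbound
  have hyC : (y / C) ^ (k + 1) ≤ 1 := by
    refine le_of_mul_le_mul_left ?_ (by positivity : (0 : ℝ) < 2 ^ (k * l))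
    calc (2 : ℝ) ^ (k * l) * (y / C) ^ (k + 1) = (γ ^ (t + 1) * 2 ^ l / (4 * y)) ^ (k + 1) := by
          have : γ ^ (t + 1) * 2 ^ l / (4 * y) = 2 ^ l / y ^ 2 * (y / C) := by
            rw [hC]
            field_simp
          have hcancel : ((2 : ℝ) ^ l) ^ (k + 1) / 2 ^ l = 2 ^ (k * l) := by
            rw [pow_succ, mul_div_cancel_right₀ _ (by positivity), ← pow_mul, mul_comm]
          rw [this, mul_pow, div_pow (2 ^ l), ← pow_mul y, hyl, hcancel]
      _ ≤ (γ ^ (t + 1) * #F / (4 * y)) ^ (k + 1) := by gcongr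
      _ ≤ 2 ^ (k * l) * 1 := by rwa [mul_one]
  have hy_le : y ≤ C := by
    rw [← div_le_one (by positivity)]
    exact (pow_le_one_iff_of_nonneg (by positivity) k.succ_ne_zero).1 hyC
  exact (hl.trans_eq hyl.symm).not_ge (by gcongr)

end UnionChain

section BoundedDegree

variable {α : Type*}

lemma sum_prod_le_prod_one_add {R : Type*} [CommSemiring R] [PartialOrder R] [IsOrderedRing R]
    {T : Finset α} {𝒟 : Finset (Finset α)} (h𝒟 : 𝒟 ⊆ T.powerset) {f : α → R}
    (hf : ∀ x ∈ T, 0 ≤ f x) :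
    ∑ D ∈ 𝒟, ∏ x ∈ D, f x ≤ ∏ x ∈ T, (1 + f x) := by
  rw [prod_one_add]
  exact sum_le_sum_of_subset_of_nonneg h𝒟 fun D hD _ =>
    prod_nonneg fun x hx => hf x (mem_powerset.1 hD hx)

variable [DecidableEq α]

lemma sum_sum_eq_sum_card_mul {R : Type*} [CommSemiring R] {T : Finset α} {𝒟 : Finset (Finset α)}
    (h𝒟 : 𝒟 ⊆ T.powerset) (s : α → R) :
    ∑ D ∈ 𝒟, ∑ x ∈ D, s x = ∑ x ∈ T, #{D ∈ 𝒟 | x ∈ D} * s x := by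
  rw [sum_comm' (t' := T) (s' := fun x => {D ∈ 𝒟 | x ∈ D}) fun D x => ?_]
  · simp only [sum_const, nsmul_eq_mul]
  · rw [mem_filter]
    exact ⟨fun h => ⟨h, mem_powerset.1 (h𝒟 h.1) h.2⟩, And.left⟩

/- Exponential tilting: compare `∑ D ∈ 𝒟, exp (-∑ x ∈ D, s x)` with the same sum over all subsets
of `T`, and bound it below by the tangent line of `exp` at the mean of the exponent. -/
lemma card_le_prod_exp_mul {T : Finset α} {𝒟 : Finset (Finset α)} (h𝒟 : 𝒟 ⊆ T.powerset)
    {s d : α → ℝ} (hs : ∀ x ∈ T, 0 ≤ s x)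
    (hd : ∀ x ∈ T, (#{D ∈ 𝒟 | x ∈ D} : ℝ) ≤ d x * #𝒟) :
    (#𝒟 : ℝ) ≤ ∏ x ∈ T, Real.exp (s x * d x) * (1 + Real.exp (-s x)) := by
  set M := ∑ x ∈ T, s x * d x with hM
  have htangent (D : Finset α) :
      Real.exp (-M) * (1 + M - ∑ x ∈ D, s x) ≤ ∏ x ∈ D, Real.exp (-s x) := by
    rw [← Real.exp_sum, sum_neg_distrib, ← le_div_iff₀' (Real.exp_pos _), ← Real.exp_sub]
    linarith [Real.add_one_le_exp (-∑ x ∈ D, s x - -M)]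
  have hmean : ∑ D ∈ 𝒟, ∑ x ∈ D, s x ≤ M * #𝒟 := by
    rw [sum_sum_eq_sum_card_mul h𝒟, hM, sum_mul]
    refine sum_le_sum fun x hx => ?_
    linarith [mul_le_mul_of_nonneg_right (hd x hx) (hs x hx)]
  have hlower : Real.exp (-M) * #𝒟 ≤ ∏ x ∈ T, (1 + Real.exp (-s x)) :=
    calc Real.exp (-M) * #𝒟 ≤ Real.exp (-M) * (#𝒟 * (1 + M) - ∑ D ∈ 𝒟, ∑ x ∈ D, s x) := by
          gcongr
          linarith
      _ = ∑ D ∈ 𝒟, Real.exp (-M) * (1 + M - ∑ x ∈ D, s x) := by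
          rw [← mul_sum, sum_sub_distrib, sum_const, nsmul_eq_mul]
      _ ≤ ∑ D ∈ 𝒟, ∏ x ∈ D, Real.exp (-s x) := sum_le_sum fun D _ => htangent D
      _ ≤ _ := sum_prod_le_prod_one_add h𝒟 fun x _ => (Real.exp_pos _).le
  rw [prod_mul_distrib, ← Real.exp_sum, ← hM]
  rwa [Real.exp_neg, inv_mul_le_iff₀ (Real.exp_pos M)] at hlower

lemma exp_mul_one_add_exp_le : Real.exp (2 * (1 / 50)) * (1 + Real.exp (-2)) ≤ 6 / 5 := by
  have hsmall : Real.exp (2 * (1 / 50)) ≤ 25 / 24 :=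
    (Real.exp_bound_div_one_sub_of_interval (by norm_num) (by norm_num)).trans_eq (by norm_num)
  have hlarge : (7 : ℝ) ≤ Real.exp 2 := by
    rw [show (2 : ℝ) = 1 + 1 by norm_num, Real.exp_add]
    nlinarith [Real.exp_one_gt_d9]
  calc Real.exp (2 * (1 / 50)) * (1 + Real.exp (-2)) ≤ 25 / 24 * (1 + 7⁻¹) := by
        rw [Real.exp_neg]
        gcongr
    _ ≤ 6 / 5 := by norm_num

lemma card_le_prod_ite_of_degree_le {T : Finset α} {𝒟 : Finset (Finset α)} (h𝒟 : 𝒟 ⊆ T.powerset)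
    (G : Finset α) (hG : ∀ x ∈ G, 50 * #{D ∈ 𝒟 | x ∈ D} ≤ #𝒟) :
    (#𝒟 : ℝ) ≤ ∏ x ∈ T, if x ∈ G then 6 / 5 else 2 := by
  refine (card_le_prod_exp_mul h𝒟 (s := fun x => if x ∈ G then 2 else 0)
    (d := fun x => if x ∈ G then 1 / 50 else 1) (fun x _ => by split_ifs <;> norm_num)
    fun x _ => ?_).trans (prod_le_prod (fun x _ => by positivity) fun x _ => ?_)
  · split_ifs with hx
    · have : (50 * #{D ∈ 𝒟 | x ∈ D} : ℝ) ≤ #𝒟 := by exact_mod_cast hG x hx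
      linarith
    · rw [one_mul]
      exact Nat.cast_le.2 (card_filter_le _ _)
  · split_ifs with hx
    · exact exp_mul_one_add_exp_le
    · norm_num

/- Taking symmetric differences with the set of coordinates that most members of `𝒱` contain turns
every near-constant coordinate into one of small degree. -/
lemma card_le_prod_ite [Finite α] {𝒱 : Finset (Finset α)} {T G : Finset α}
    (hconst : ∀ x ∉ T, (∀ A ∈ 𝒱, x ∈ A) ∨ ∀ A ∈ 𝒱, x ∉ A)
    (hG : ∀ x ∈ G, 50 * #{A ∈ 𝒱 | x ∈ A} ≤ #𝒱 ∨ 50 * #{A ∈ 𝒱 | x ∉ A} ≤ #𝒱) :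
    (#𝒱 : ℝ) ≤ ∏ x ∈ T, if x ∈ G then 6 / 5 else 2 := by
  have := Fintype.ofFinite α
  set P : Finset α := {x | 50 * #{A ∈ 𝒱 | x ∉ A} ≤ #𝒱} with hP
  have hinj : Function.Injective fun A : Finset α => symmDiff A P := symmDiff_left_injective P
  rw [← card_image_of_injective 𝒱 hinj]
  refine card_le_prod_ite_of_degree_le (fun D hD => ?_) G fun x hx => ?_
  · obtain ⟨A, hA, rfl⟩ := mem_image.1 hD
    refine mem_powerset.2 fun x hx => ?_
    by_contra hxT
    rcases hconst x hxT with hall | hnone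
    · have hxP : x ∈ P := by simp [hP, filter_false_of_mem fun B hB => not_not.2 (hall B hB)]
      simp [mem_symmDiff, hxP, hall A hA] at hx
    · have hxP : x ∈ P := by simpa [mem_symmDiff, hnone A hA] using hx
      have hfew := (mem_filter.1 hxP).2
      rw [filter_true_of_mem hnone] at hfew
      have := card_pos.2 ⟨A, hA⟩
      lia
  · rw [filter_image, card_image_of_injective _ hinj, card_image_of_injective _ hinj]
    by_cases hxP : x ∈ P
    · simpa [mem_symmDiff, hxP] using (mem_filter.1 hxP).2
    · have := (hG x hx).resolve_right fun h => hxP (mem_filter.2 ⟨mem_univ x, h⟩)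
      simpa [mem_symmDiff, hxP] using this

end BoundedDegree

section Core

lemma card_filter_mul_le_sum {β : Type*} (s : Finset β) (f : β → ℕ) (c : ℕ) :
    #{a ∈ s | c ≤ f a} * c ≤ ∑ a ∈ s, f a :=
  (card_nsmul_le_sum _ f c fun _ ha => (mem_filter.1 ha).2).trans
    (sum_le_sum_of_subset (filter_subset _ s))

variable {β ι : Type*} [Preorder ι] [DecidableLT ι] (r : β → β → Prop) [DecidableRel r]
  (V : ι → Finset β)

/-- The vertex `a`, thought of as a member of `V i`, is related to more than 99 percent of `V j`, in
the direction prescribed by the order of `i` and `j`. -/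
def IsTypical (i j : ι) (a : β) : Prop :=
  (j < i → 100 * #{b ∈ V j | ¬ r b a} < #(V j)) ∧ (i < j → 100 * #{b ∈ V j | ¬ r a b} < #(V j))

instance (i j : ι) : DecidablePred (IsTypical r V i j) :=
  fun _ => inferInstanceAs (Decidable (_ ∧ _))

variable {r V} in
lemma card_not_isTypical_mul_le {D : ℕ}
    (hD : ∀ i j, i < j → #(Rel.interedges (fun a b => ¬ r a b) (V i) (V j)) ≤ D) (i j : ι) :
    #{a ∈ V i | ¬ IsTypical r V i j a} * #(V j) ≤ 100 * D := by
  unfold IsTypical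
  by_cases hji : j < i
  · simp only [hji, hji.not_gt, false_imp_iff, true_imp_iff, and_true, not_lt]
    refine (card_filter_mul_le_sum _ _ _).trans ?_
    rw [← mul_sum, ← card_interedges_eq_sum_right fun a b => ¬ r a b]
    exact Nat.mul_le_mul_left 100 (hD j i hji)
  by_cases hij : i < j
  · simp only [hij, hji, false_imp_iff, true_imp_iff, true_and, not_lt]
    refine (card_filter_mul_le_sum _ _ _).trans ?_
    rw [← mul_sum, ← card_interedges_eq_sum_left fun a b => ¬ r a b]
    exact Nat.mul_le_mul_left 100 (hD i j hij)
  · simp [hji, hij]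

variable [Fintype ι]

/-- The members of `V i` that are typical with respect to every other `V j`. -/
def core (i : ι) : Finset β :=
  {a ∈ V i | ∀ j, IsTypical r V i j a}

lemma core_subset (i : ι) : core r V i ⊆ V i :=
  filter_subset _ _

variable {r V} in
lemma mul_card_sdiff_core_le [DecidableEq β] {v : ℝ} (hv : ∀ j, v ≤ #(V j)) {D : ℕ}
    (hD : ∀ i j, i < j → #(Rel.interedges (fun a b => ¬ r a b) (V i) (V j)) ≤ D) (i : ι) :
    v * #(V i \ core r V i) ≤ 100 * Fintype.card ι * D := by
  rcases le_or_gt v 0 with hv0 | hv0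
  · exact (mul_nonpos_of_nonpos_of_nonneg hv0 (Nat.cast_nonneg _)).trans (by positivity)
  have hcover : V i \ core r V i ⊆ univ.biUnion fun j => {a ∈ V i | ¬ IsTypical r V i j a} := by
    intro a ha
    obtain ⟨haV, hacore⟩ := mem_sdiff.1 ha
    simp only [core, mem_filter, haV, true_and, not_forall] at hacore
    obtain ⟨j, hj⟩ := hacore
    exact mem_biUnion.2 ⟨j, mem_univ j, mem_filter.2 ⟨haV, hj⟩⟩
  have hbad (j : ι) : (#{a ∈ V i | ¬ IsTypical r V i j a} * #(V j) : ℝ) ≤ 100 * D := by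
    exact_mod_cast card_not_isTypical_mul_le hD i j
  calc v * #(V i \ core r V i) ≤ v * ∑ j, (#{a ∈ V i | ¬ IsTypical r V i j a} : ℝ) := by
        gcongr
        exact_mod_cast (card_le_card hcover).trans card_biUnion_le
    _ = ∑ j, #{a ∈ V i | ¬ IsTypical r V i j a} * v := by rw [mul_comm, sum_mul]
    _ ≤ ∑ _j : ι, (100 * D : ℝ) := sum_le_sum fun j _ => (hbad j).trans' (by gcongr; exact hv j)
    _ = 100 * Fintype.card ι * D := by
        rw [sum_const, card_univ, nsmul_eq_mul]
        ring

end Core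

section FreeCoordinates

variable {α : Type*} [DecidableEq α]

/-- Fewer than one percent of the members of `𝒱` contain `x`. -/
def IsRare (𝒱 : Finset (Finset α)) (x : α) : Prop :=
  100 * #{B ∈ 𝒱 | x ∈ B} < #𝒱

/-- Fewer than one percent of the members of `𝒱` avoid `x`. -/
def IsCommon (𝒱 : Finset (Finset α)) (x : α) : Prop :=
  100 * #{B ∈ 𝒱 | x ∉ B} < #𝒱

instance (𝒱 : Finset (Finset α)) : DecidablePred (IsRare 𝒱) :=
  fun _ => Nat.decLt _ _

instance (𝒱 : Finset (Finset α)) : DecidablePred (IsCommon 𝒱) :=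
  fun _ => Nat.decLt _ _

lemma IsRare.not_isCommon {𝒱 : Finset (Finset α)} {x : α} (hrare : IsRare 𝒱 x) :
    ¬ IsCommon 𝒱 x := by
  intro hcommon
  have hsplit := card_filter_add_card_filter_not (s := 𝒱) fun B => x ∈ B
  unfold IsRare at hrare
  unfold IsCommon at hcommon
  lia

variable {ι : Type*} [Fintype ι] [LinearOrder ι] {V : ι → Finset (Finset α)} {i j : ι} {x : α}
  {A : Finset α}

lemma mem_of_mem_core (hA : A ∈ core (· ⊂ ·) V i) (hji : j < i) (hx : ¬ IsRare (V j) x) :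
    x ∈ A := by
  by_contra hxA
  refine hx (lt_of_le_of_lt ?_ (((mem_filter.1 hA).2 j).1 hji))
  gcongr 100 * #?_
  exact monotone_filter_right _ fun B _ hxB hBA => hxA (hBA.subset hxB)

lemma notMem_of_mem_core (hA : A ∈ core (· ⊂ ·) V i) (hij : i < j) (hx : ¬ IsCommon (V j) x) :
    x ∉ A := by
  intro hxA
  refine hx (lt_of_le_of_lt ?_ (((mem_filter.1 hA).2 j).2 hij))
  gcongr 100 * #?_
  exact monotone_filter_right _ fun B _ hxB hAB => hxB (hAB.subset hxA)

variable [Fintype α]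

variable (V i) in
/-- The coordinates on which the order relations between `V i` and the other families put no
constraint: a coordinate outside this set is constant on `core (· ⊂ ·) V i`. -/
def freeCoords : Finset α :=
  {x | (∀ j < i, IsRare (V j) x) ∧ ∀ j > i, IsCommon (V j) x}

lemma mem_freeCoords :
    x ∈ freeCoords V i ↔ (∀ j < i, IsRare (V j) x) ∧ ∀ j > i, IsCommon (V j) x := by
  simp [freeCoords]

lemma forall_mem_or_forall_notMem_core (hx : x ∉ freeCoords V i) :
    (∀ A ∈ core (· ⊂ ·) V i, x ∈ A) ∨ ∀ A ∈ core (· ⊂ ·) V i, x ∉ A := by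
  rw [mem_freeCoords, not_and_or] at hx
  push Not at hx
  obtain ⟨j, hji, hrare⟩ | ⟨j, hij, hcommon⟩ := hx
  · exact .inl fun A hA => mem_of_mem_core hA hji hrare
  · exact .inr fun A hA => notMem_of_mem_core hA hij hcommon

lemma freeCoords_subset_of_mem_core (hdisj : Disjoint (freeCoords V j) (freeCoords V i))
    (hA : A ∈ core (· ⊂ ·) V i) (hji : j < i) : freeCoords V j ⊆ A := by
  intro x hx
  have hxi := disjoint_left.1 hdisj hx
  rw [mem_freeCoords, not_and] at hxi
  by_contra hxA
  refine hxi (fun l hl => ?_) fun l hl => (mem_freeCoords.1 hx).2 l (hji.trans hl)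
  by_contra hrare
  exact hxA (mem_of_mem_core hA hl hrare)

lemma disjoint_freeCoords_of_mem_core (hdisj : Disjoint (freeCoords V j) (freeCoords V i))
    (hA : A ∈ core (· ⊂ ·) V i) (hij : i < j) : Disjoint (freeCoords V j) A := by
  refine disjoint_left.2 fun x hx hxA => ?_
  have hxi := disjoint_left.1 hdisj hx
  rw [mem_freeCoords, not_and'] at hxi
  refine hxi (fun l hl => ?_) fun l hl => (mem_freeCoords.1 hx).1 l (hl.trans hij)
  by_contra hcommon
  exact notMem_of_mem_core hA hl hcommon hxA

variable (V i x) in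
/-- An upper bound for the factor that the coordinate `x` contributes to `#(core (· ⊂ ·) V i)`. -/
noncomputable def coordWeight : ℝ :=
  if x ∈ freeCoords V i then (if IsRare (V i) x ∨ IsCommon (V i) x then 6 / 5 else 2) else 1

lemma coordWeight_nonneg : 0 ≤ coordWeight V i x := by
  unfold coordWeight
  positivity

lemma card_core_le_prod_coordWeight (hcore : #(V i) ≤ 2 * #(core (· ⊂ ·) V i)) :
    (#(core (· ⊂ ·) V i) : ℝ) ≤ ∏ x, coordWeight V i x := by
  have hcard (p : Finset α → Prop) [DecidablePred p] (h : 100 * #{B ∈ V i | p B} < #(V i)) :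
      50 * #{A ∈ core (· ⊂ ·) V i | p A} ≤ #(core (· ⊂ ·) V i) := by
    have := card_le_card (filter_subset_filter p (core_subset (· ⊂ ·) V i))
    lia
  have hbound := card_le_prod_ite (𝒱 := core (· ⊂ ·) V i) (T := freeCoords V i)
    (G := {x | IsRare (V i) x ∨ IsCommon (V i) x}) (fun x => forall_mem_or_forall_notMem_core)
    fun x hx => (mem_filter.1 hx).2.imp (hcard (x ∈ ·)) (hcard (x ∉ ·))
  simp only [mem_filter, mem_univ, true_and] at hbound
  simpa only [coordWeight, prod_ite_mem, univ_inter] using hbound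

lemma card_core_le_two_pow (hcore : #(V i) ≤ 2 * #(core (· ⊂ ·) V i)) :
    #(core (· ⊂ ·) V i) ≤ 2 ^ #(freeCoords V i) := by
  have hweight : ∏ x, coordWeight V i x ≤ ∏ x, if x ∈ freeCoords V i then (2 : ℝ) else 1 :=
    prod_le_prod (fun _ _ => coordWeight_nonneg) fun x _ => by
      unfold coordWeight
      split_ifs <;> norm_num
  have := (card_core_le_prod_coordWeight hcore).trans hweight
  rw [prod_ite_mem, univ_inter, prod_const] at this
  exact_mod_cast this

lemma le_card_freeCoords {l : ℕ} (hcore : #(V i) ≤ 2 * #(core (· ⊂ ·) V i))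
    (hl : 2 ^ l < 2 * #(core (· ⊂ ·) V i)) : l ≤ #(freeCoords V i) := by
  have hpow : 2 ^ l < 2 ^ (#(freeCoords V i) + 1) := by
    have := card_core_le_two_pow hcore
    rw [pow_succ]
    lia
  exact Nat.lt_succ_iff.1 ((Nat.pow_lt_pow_iff_right one_lt_two).1 hpow)

variable (V x) in
lemma card_filter_mem_freeCoords_le_two : #{i | x ∈ freeCoords V i} ≤ 2 := by
  by_contra! h
  have hfree (m : Fin 3) := (mem_filter.1 (orderEmbOfCardLe_mem _ h m)).2
  have hlt {m m' : Fin 3} (hm : m < m') := (orderEmbOfCardLe _ h).lt_iff_lt.2 hm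
  exact IsRare.not_isCommon ((mem_freeCoords.1 (hfree 2)).1 _ (hlt (m := 1) (by decide)))
    ((mem_freeCoords.1 (hfree 0)).2 _ (hlt (by decide)))

lemma coordWeight_le_two : coordWeight V i x ≤ 2 := by
  unfold coordWeight
  split_ifs <;> norm_num

lemma coordWeight_mul_coordWeight_of_lt (hi : x ∈ freeCoords V i) (hj : x ∈ freeCoords V j)
    (hij : i < j) : coordWeight V i x * coordWeight V j x = 36 / 25 := by
  have hrare := (mem_freeCoords.1 hj).1 i hij
  have hcommon := (mem_freeCoords.1 hi).2 j hij
  simp only [coordWeight, hi, hj, hrare, hcommon, true_or, or_true, if_true]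
  norm_num

variable (V x) in
lemma prod_filter_coordWeight :
    ∏ i with x ∈ freeCoords V i, coordWeight V i x = ∏ i, coordWeight V i x :=
  prod_filter_of_ne fun i _ hi => by
    by_contra hfree
    exact hi (by rw [coordWeight, if_neg hfree])

lemma prod_coordWeight_le_of_not_existsUnique (hx : ¬ ∃! i, x ∈ freeCoords V i) :
    ∏ i, coordWeight V i x ≤ 36 / 25 := by
  rw [← prod_filter_coordWeight]
  obtain hcard | hcard : #{i | x ∈ freeCoords V i} = 0 ∨ #{i | x ∈ freeCoords V i} = 2 := by
    have := card_filter_mem_freeCoords_le_two V x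
    have : #{i | x ∈ freeCoords V i} ≠ 1 :=
      fun h => hx ((Fintype.existsUnique_iff_card_one _).2 h)
    lia
  · rw [card_eq_zero.1 hcard, prod_empty]
    norm_num
  · obtain ⟨i, j, hij, hpair⟩ := card_eq_two.1 hcard
    have hi := (mem_filter.1 (hpair.ge (mem_insert_self i {j}))).2
    have hj := (mem_filter.1 (hpair.ge (mem_insert_of_mem (mem_singleton_self j)))).2
    rw [hpair, prod_pair hij]
    rcases hij.lt_or_gt with hlt | hgt
    · exact (coordWeight_mul_coordWeight_of_lt hi hj hlt).le
    · rw [mul_comm]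
      exact (coordWeight_mul_coordWeight_of_lt hj hi hgt).le

variable (V x) in
lemma prod_coordWeight_le_two : ∏ i, coordWeight V i x ≤ 2 := by
  by_cases hx : ∃! i, x ∈ freeCoords V i
  · obtain ⟨i, hsingle⟩ := card_eq_one.1 ((Fintype.existsUnique_iff_card_one _).1 hx)
    rw [← prod_filter_coordWeight, hsingle, prod_singleton]
    exact coordWeight_le_two
  · exact (prod_coordWeight_le_of_not_existsUnique hx).trans (by norm_num)

lemma existsUnique_mem_freeCoords (hcore : ∀ i, #(V i) ≤ 2 * #(core (· ⊂ ·) V i))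
    (hprod : 3 / 4 * (2 : ℝ) ^ Fintype.card α ≤ ∏ i, (#(core (· ⊂ ·) V i) : ℝ)) (x : α) :
    ∃! i, x ∈ freeCoords V i := by
  by_contra hx
  have hbound : ∏ i, (#(core (· ⊂ ·) V i) : ℝ) ≤ 36 / 25 * 2 ^ (Fintype.card α - 1) :=
    calc _ ≤ ∏ i, ∏ y, coordWeight V i y :=
          prod_le_prod (fun _ _ => Nat.cast_nonneg _) fun i _ =>
            card_core_le_prod_coordWeight (hcore i)
      _ = (∏ i, coordWeight V i x) * ∏ y ∈ univ.erase x, ∏ i, coordWeight V i y := by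
          rw [prod_comm]
          exact (mul_prod_erase univ (fun y => ∏ i, coordWeight V i y) (mem_univ x)).symm
      _ ≤ 36 / 25 * ∏ y ∈ univ.erase x, 2 := by
          gcongr with y
          · exact prod_nonneg fun y _ => prod_nonneg fun i _ => coordWeight_nonneg
          · exact prod_coordWeight_le_of_not_existsUnique hx
          · exact fun y _ => prod_nonneg fun i _ => coordWeight_nonneg
          · exact prod_coordWeight_le_two V y
      _ = _ := by rw [prod_const, card_erase_of_mem (mem_univ x), card_univ]
  have hpow : (2 : ℝ) * 2 ^ (Fintype.card α - 1) = 2 ^ Fintype.card α :=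
    mul_pow_sub_one (Fintype.card_pos_iff.2 ⟨x⟩).ne' 2
  have : (0 : ℝ) < 2 ^ Fintype.card α := by positivity
  linarith

end FreeCoordinates

section Tower

lemma card_eq_of_partition_of_le {α ι : Type*} [Fintype α] [Fintype ι] {l : ℕ}
    (hα : Fintype.card α = Fintype.card ι * l) {T : ι → Finset α} (hT : ∀ x, ∃! i, x ∈ T i)
    (hl : ∀ i, l ≤ #(T i)) (i : ι) : #(T i) = l := by
  classical
  have hdisj (i j : ι) (hij : i ≠ j) : Disjoint (T i) (T j) :=
    disjoint_left.2 fun x hi hj => hij ((hT x).unique hi hj)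
  have hunion : univ.biUnion T = univ :=
    eq_univ_of_forall fun x => mem_biUnion.2 ⟨_, mem_univ _, (hT x).exists.choose_spec⟩
  have hsum : ∑ _i : ι, l = ∑ i, #(T i) := by
    rw [← card_biUnion fun i _ j _ => hdisj i j, hunion, card_univ, hα, sum_const, card_univ,
      smul_eq_mul]
  exact ((sum_eq_sum_iff_of_le fun i _ => hl i).1 hsum i (mem_univ i)).symm

lemma exists_isTower_of_partition {n k : ℕ} {T : Fin k → Finset (Fin n)}
    (hT : ∀ x, ∃! i, x ∈ T i) (hcard : ∀ i, #(T i) = n / k) :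
    ∃ 𝒯 : Finset (Finset (Fin n)), IsTower n k 𝒯 ∧
      ∀ i A, (∀ j < i, T j ⊆ A) → (∀ j > i, Disjoint (T j) A) → A ∈ 𝒯 := by
  set X : ℕ → Finset (Fin n) := fun m => ({j | j < m} : Finset (Fin k)).biUnion T with hX
  refine ⟨_, ⟨X, by simp [hX], ?_, fun m hm => ?_, fun m _ => ?_, rfl⟩,
    fun i A hbelow habove => ?_⟩
  · refine eq_univ_of_forall fun x => ?_
    obtain ⟨i, hi, -⟩ := hT x
    exact mem_biUnion.2 ⟨i, by simp, hi⟩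
  · have hdisj : ∀ i j, i ≠ j → Disjoint (T i) (T j) := fun i j hij =>
      disjoint_left.2 fun x hi hj => hij ((hT x).unique hi hj)
    rw [hX, card_biUnion fun i _ j _ => hdisj i j, sum_const_nat fun i _ => hcard i,
      Fin.card_filter_val_lt, min_eq_right hm]
  · exact biUnion_subset_biUnion_of_subset_left T
      (monotone_filter_right _ fun j _ hj => hj.trans m.lt_succ_self)
  · have hlower : X i ⊆ A := biUnion_subset.2 fun j hj => hbelow j (mem_filter.1 hj).2
    have hupper : A ⊆ X (i + 1) := fun x hx => by
      obtain ⟨j, hj, -⟩ := hT x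
      have hji : j ≤ i := not_lt.1 fun hij => disjoint_left.1 (habove j hij) hj hx
      exact mem_biUnion.2 ⟨j, mem_filter.2 ⟨mem_univ j, Nat.lt_succ_of_le hji⟩, hj⟩
    exact mem_filter.2 ⟨mem_univ A, i + 1, mem_Icc.2 ⟨i.val.succ_pos, i.isLt⟩, hlower, hupper⟩

lemma exists_isTower_of_card_core {k l : ℕ} (hk : k ≠ 0)
    {V : Fin k → Finset (Finset (Fin (k * l)))} {κ : ℝ} (hκ : κ * k ≤ 1 / 4)
    (hcore : ∀ i, #(V i) ≤ 2 * #(core (· ⊂ ·) V i))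
    (hcard : ∀ i, (1 - κ) * 2 ^ l ≤ (#(core (· ⊂ ·) V i) : ℝ)) :
    ∃ 𝒯 : Finset (Finset (Fin (k * l))), IsTower (k * l) k 𝒯 ∧
      ∀ i, core (· ⊂ ·) V i ⊆ 𝒯 := by
  have hκ' : κ ≤ 1 / 4 := by
    have : (1 : ℝ) ≤ k := by exact_mod_cast Nat.one_le_iff_ne_zero.2 hk
    nlinarith
  have hbernoulli : 3 / 4 ≤ (1 - κ) ^ k := by
    have := one_add_mul_le_pow (a := -κ) (by linarith) k
    rw [← sub_eq_add_neg] at this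
    linarith
  have hpartition : ∀ x, ∃! i, x ∈ freeCoords V i := by
    refine existsUnique_mem_freeCoords hcore ?_
    calc 3 / 4 * (2 : ℝ) ^ Fintype.card (Fin (k * l)) ≤ (1 - κ) ^ k * (2 ^ l) ^ k := by
          rw [Fintype.card_fin, ← pow_mul, mul_comm l]
          gcongr
      _ = ∏ _i : Fin k, (1 - κ) * 2 ^ l := by simp [mul_pow]
      _ ≤ _ := prod_le_prod (fun _ _ => mul_nonneg (by linarith) (by positivity)) fun i _ => hcard i
  have hdisj (i j : Fin k) (hij : i ≠ j) : Disjoint (freeCoords V i) (freeCoords V j) :=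
    disjoint_left.2 fun x hi hj => hij ((hpartition x).unique hi hj)
  have hle (i : Fin k) : l ≤ #(freeCoords V i) := by
    refine le_card_freeCoords (hcore i) ?_
    have : (2 : ℝ) ^ l < 2 * #(core (· ⊂ ·) V i) := by
      nlinarith [hcard i, pow_pos (two_pos (α := ℝ)) l]
    exact_mod_cast this
  have hfree (i : Fin k) : #(freeCoords V i) = k * l / k := by
    rw [Nat.mul_div_cancel_left l (Nat.pos_of_ne_zero hk)]
    exact card_eq_of_partition_of_le (by simp) hpartition hle i
  obtain ⟨𝒯, h𝒯, hmem⟩ := exists_isTower_of_partition hpartition hfree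
  exact ⟨𝒯, h𝒯, fun i A hA => hmem i A
    (fun j hji => freeCoords_subset_of_mem_core (hdisj j i hji.ne) hA hji)
    fun j hij => disjoint_freeCoords_of_mem_core (hdisj j i hij.ne') hA hij⟩

end Tower

section LayerCores

variable {β : Type*} {r : β → β → Prop} [DecidableRel r] [DecidableEq β] {F : Finset β}
  {κ γ : ℝ} {k : ℕ}

lemma le_meanLayerCard (hpeel : #(peel r F (γ * #F) k) ≤ γ * #F) :
    (1 - γ) * (#F / k) ≤ meanLayerCard r F (γ * #F) k := by
  have hsum : (#(peel r F (γ * #F) k) : ℝ) + ∑ i ∈ range k, (#(layer r F (γ * #F) i) : ℝ) = #F := by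
    exact_mod_cast card_peel_add_sum_card_layer r F (γ * #F) k
  rw [meanLayerCard, mul_div_assoc']
  gcongr
  linarith

lemma card_sdiff_le_of_forall_core_layer_subset (hk : k ≠ 0) {a c : ℝ} {T : Finset β}
    (hT : ∀ i : Fin k, core r (fun j : Fin k => layer r F c j) i ⊆ T)
    (hcard : ∀ i : Fin k,
      (1 - a) * (#F / k) ≤ #(core r (fun j : Fin k => layer r F c j) i)) :
    #(F \ T) ≤ a * #F := by
  set C : Fin k → Finset β := core r fun j : Fin k => layer r F c j
  have hCV (i : Fin k) : C i ⊆ layer r F c i := core_subset r (fun j : Fin k => layer r F c j) i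
  have hdisj (i j : Fin k) (hij : i ≠ j) : Disjoint (C i) (C j) :=
    (layer_pairwise_disjoint r F c (Fin.val_ne_of_ne hij)).mono (hCV i) (hCV j)
  have hsub : univ.biUnion C ⊆ F ∩ T := biUnion_subset.2 fun i _ =>
    subset_inter ((hCV i).trans (layer_subset r F c i)) (hT i)
  have hinter : (1 - a) * #F ≤ (#(F ∩ T) : ℝ) :=
    calc (1 - a) * #F = ∑ _i : Fin k, (1 - a) * (#F / k : ℝ) := by
          rw [sum_const, card_univ, Fintype.card_fin, nsmul_eq_mul]
          field_simp
      _ ≤ ∑ i, (#(C i) : ℝ) := sum_le_sum fun i _ => hcard i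
      _ = #(univ.biUnion C) := by rw [card_biUnion fun i _ j _ => hdisj i j, Nat.cast_sum]
      _ ≤ #(F ∩ T) := Nat.cast_le.2 (card_le_card hsub)
  have hsplit : (#(F \ T) + #(F ∩ T) : ℝ) = #F := by
    exact_mod_cast card_sdiff_add_card_inter F T
  linarith

variable (hγ : 0 ≤ γ) (hF : 1 ≤ γ * #F) (hpeel : #(peel r F (γ * #F) k) ≤ γ * #F)
  (hedges : (1 - (1 + γ) / k) * ((#F).choose 2 : ℝ) ≤ #(Rel.interedges r F F))

include hγ hF hpeel hedges

lemma crossDefect_le : crossDefect r F (γ * #F) k ≤ 4 * γ * #F ^ 2 := by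
  have hvar : 0 ≤ ∑ i ∈ range k,
      ((#(layer r F (γ * #F) i) : ℝ) - meanLayerCard r F (γ * #F) k) ^ 2 :=
    sum_nonneg fun _ _ => sq_nonneg _
  linarith [crossDefect_add_variance_le r F hγ hF hpeel hedges]

lemma sq_card_layer_sub_mean_le {i : ℕ} (hi : i < k) :
    ((#(layer r F (γ * #F) i) : ℝ) - meanLayerCard r F (γ * #F) k) ^ 2 ≤ 8 * γ * #F ^ 2 := by
  have hsingle := single_le_sum (f := fun i =>
    ((#(layer r F (γ * #F) i) : ℝ) - meanLayerCard r F (γ * #F) k) ^ 2)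
    (fun _ _ => sq_nonneg _) (mem_range.2 hi)
  linarith [crossDefect_add_variance_le r F hγ hF hpeel hedges,
    (crossDefect r F (γ * #F) k).cast_nonneg (α := ℝ)]

variable (hκ : 0 ≤ κ) (hκ' : κ ≤ 1 / 4) (hγκ : 800 * k ^ 3 * γ = κ ^ 2)

include hκ hκ' hγκ

lemma le_card_layer {i : ℕ} (hi : i < k) :
    (1 - κ) * (#F / k) ≤ #(layer r F (γ * #F) i) := by
  have hk : (1 : ℝ) ≤ k := by exact_mod_cast (Nat.zero_le i).trans_lt hi
  have hγ_le : 800 * k ^ 2 * γ ≤ κ ^ 2 := by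
    rw [← hγκ]
    gcongr
    norm_num
  have hdev : |(#(layer r F (γ * #F) i) : ℝ) - meanLayerCard r F (γ * #F) k| ≤
      κ / 10 * (#F / k) := by
    refine abs_le_of_sq_le_sq
      ((sq_card_layer_sub_mean_le hγ hF hpeel hedges hi).trans ?_) (by positivity)
    rw [mul_pow, div_pow, div_pow, mul_div_assoc', le_div_iff₀ (by positivity)]
    linarith [mul_le_mul_of_nonneg_right hγ_le (sq_nonneg (#F : ℝ))]
  have hmean := le_meanLayerCard hpeel
  have hγ_small : γ ≤ κ / 10 := by nlinarith [one_le_pow₀ hk (n := 2)]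
  have : γ * (#F / k) ≤ κ / 10 * (#F / k) := by gcongr
  have : 0 ≤ κ * (#F / k : ℝ) := by positivity
  linarith [(abs_le.1 hdev).1]

lemma card_layer_sdiff_core_le (i : Fin k) :
    #(layer r F (γ * #F) i \ core r (fun j : Fin k => layer r F (γ * #F) j) i) ≤
      κ * (#F / k) := by
  set W := layer r F (γ * #F) i \ core r (fun j : Fin k => layer r F (γ * #F) j) i
  have hk : (0 : ℝ) < k := by exact_mod_cast i.pos
  have hM : (0 : ℝ) < #F / k :=
    div_pos (pos_of_mul_pos_right (zero_lt_one.trans_le hF) hγ) hk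
  have hmarkov := mul_card_sdiff_core_le (r := r) (V := fun j : Fin k => layer r F (γ * #F) j)
    (fun j => le_card_layer hγ hF hpeel hedges hκ hκ' hγκ j.isLt)
    (fun j j' hj => card_interedges_layer_le_crossDefect r F _ hj j'.isLt) i
  have hdefect : 100 * k * (4 * γ * #F ^ 2) = κ ^ 2 / 2 * (#F / k : ℝ) ^ 2 := by
    rw [← hγκ]
    field_simp
    ring
  have hbound : (1 - κ) * (#F / k) * #W ≤ κ ^ 2 / 2 * (#F / k : ℝ) ^ 2 := by
    rw [← hdefect]
    refine hmarkov.trans ?_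
    rw [Fintype.card_fin]
    gcongr
    exact crossDefect_le hγ hF hpeel hedges
  have hcancel : (1 - κ) * #W ≤ κ ^ 2 / 2 * (#F / k : ℝ) :=
    le_of_mul_le_mul_right (by linarith) hM
  have : κ ^ 2 / 2 * (#F / k : ℝ) ≤ (1 - κ) * κ * (#F / k) := by
    gcongr
    nlinarith
  exact le_of_mul_le_mul_left (by linarith) (by linarith : 0 < 1 - κ)

lemma le_card_core_layer (i : Fin k) :
    (1 - 2 * κ) * (#F / k) ≤ #(core r (fun j : Fin k => layer r F (γ * #F) j) i) := by
  have hsplit := cast_card_sdiff (R := ℝ) (core_subset r (fun j : Fin k => layer r F (γ * #F) j) i)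
  linarith [card_layer_sdiff_core_le hγ hF hpeel hedges hκ hκ' hγκ i,
    le_card_layer hγ hF hpeel hedges hκ hκ' hγκ i.isLt]

end LayerCores

lemma exists_isTower_of_card_peel_le {k l : ℕ} (hk : k ≠ 0) {F : Finset (Finset (Fin (k * l)))}
    {κ γ : ℝ} (hκ : 0 ≤ κ) (hκ' : κ * k ≤ 1 / 12) (hγ : 0 ≤ γ) (hγκ : 800 * k ^ 3 * γ = κ ^ 2)
    (hsize : (1 - γ) * k * 2 ^ l ≤ #F) (hF : 1 ≤ γ * #F)
    (hpeel : #(peel (· ⊂ ·) F (γ * #F) k) ≤ γ * #F)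
    (hedges : (1 - (1 + γ) / k) * ((#F).choose 2 : ℝ) ≤ compCount F) :
    ∃ 𝒯 : Finset (Finset (Fin (k * l))), IsTower (k * l) k 𝒯 ∧ #(F \ 𝒯) ≤ 2 * κ * #F := by
  have hk' : (1 : ℝ) ≤ k := by exact_mod_cast Nat.one_le_iff_ne_zero.2 hk
  have hκ_le : κ ≤ 1 / 4 := by nlinarith
  have hγ_le : γ ≤ κ := by nlinarith [one_le_pow₀ hk' (n := 3)]
  set V : Fin k → Finset (Finset (Fin (k * l))) := fun i => layer (· ⊂ ·) F (γ * #F) i with hV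
  have hlarge (i : Fin k) : (1 - 2 * κ) * (#F / k) ≤ #(core (· ⊂ ·) V i) :=
    le_card_core_layer hγ hF hpeel hedges hκ hκ_le hγκ i
  have hhalf (i : Fin k) : #(V i) ≤ 2 * #(core (· ⊂ ·) V i) := by
    have hsplit := cast_card_sdiff (R := ℝ) (core_subset (· ⊂ ·) V i)
    have hfew : (#(V i \ core (· ⊂ ·) V i) : ℝ) ≤ κ * (#F / k) :=
      card_layer_sdiff_core_le hγ hF hpeel hedges hκ hκ_le hγκ i
    have : 0 ≤ (1 - 3 * κ) * (#F / k : ℝ) := mul_nonneg (by linarith) (by positivity)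
    have : (#(V i) : ℝ) ≤ 2 * #(core (· ⊂ ·) V i) := by linarith [hlarge i]
    exact_mod_cast this
  have hcard (i : Fin k) : (1 - 3 * κ) * 2 ^ l ≤ (#(core (· ⊂ ·) V i) : ℝ) := by
    have hcube : (1 - γ) * 2 ^ l ≤ (#F / k : ℝ) := by
      rw [le_div_iff₀ (by positivity)]
      linarith
    calc (1 - 3 * κ) * 2 ^ l ≤ (1 - 2 * κ) * ((1 - γ) * 2 ^ l) := by
          rw [← mul_assoc]
          gcongr
          nlinarith [mul_nonneg hκ hγ]
      _ ≤ (1 - 2 * κ) * (#F / k) := by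
          gcongr
          linarith
      _ ≤ _ := hlarge i
  obtain ⟨𝒯, h𝒯, hcore⟩ :=
    exists_isTower_of_card_core hk (κ := 3 * κ) (by linarith) hhalf hcard
  exact ⟨𝒯, h𝒯, card_sdiff_le_of_forall_core_layer_subset hk hcore hlarge⟩

lemma exists_stability_constants {ε : ℝ} (hε : 0 < ε) {k : ℕ} (hk : k ≠ 0) :
    ∃ κ γ : ℝ, 0 < κ ∧ 2 * κ ≤ ε ∧ κ * k ≤ 1 / 12 ∧ 0 < γ ∧ γ ≤ 1 / 2 ∧
      800 * k ^ 3 * γ = κ ^ 2 := by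
  have hk' : (1 : ℝ) ≤ k := by exact_mod_cast Nat.one_le_iff_ne_zero.2 hk
  set κ : ℝ := min (ε / 2) (1 / (12 * k))
  have hκ : 0 < κ := by positivity
  have hκk : κ * k ≤ 1 / 12 := by
    rw [← le_div_iff₀ (by positivity), div_div]
    exact min_le_right _ _
  have hκ1 : κ ^ 2 ≤ 1 := pow_le_one₀ hκ.le (by nlinarith)
  refine ⟨κ, κ ^ 2 / (800 * k ^ 3), hκ, ?_, hκk, by positivity, ?_, by field_simp⟩
  · linarith [min_le_left (ε / 2) (1 / (12 * k : ℝ))]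
  · rw [div_le_iff₀ (by positivity)]
    linarith [one_le_pow₀ hk' (n := 3)]

theorem stmt5 (ε : ℝ) (hε : 0 < ε) (k : ℕ) (hk : 2 ≤ k) :
    ∃ η : ℝ, 0 < η ∧ ∃ n₀ : ℕ, ∀ n ≥ n₀, k ∣ n →
      ∀ ℱ : Finset (Finset (Fin n)),
        (1 - η) * k * 2 ^ (n / k) ≤ (ℱ.card : ℝ) →
        (1 - (1 + η) / k) * (ℱ.card.choose 2 : ℝ) ≤ (compCount ℱ : ℝ) →
        ∃ 𝒯 : Finset (Finset (Fin n)), IsTower n k 𝒯 ∧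
          ((ℱ \ 𝒯).card : ℝ) ≤ ε * ℱ.card := by
  have hk0 : k ≠ 0 := by lia
  obtain ⟨κ, γ, hκ, hκε, hκk, hγ, hγ1, hγκ⟩ := exists_stability_constants hε hk0
  obtain ⟨l₀, hl₀⟩ := Filter.eventually_atTop.1 ((eventually_card_peel_lt hγ (by linarith) hk0).and
    ((tendsto_pow_atTop_atTop_of_one_lt one_lt_two).eventually_ge_atTop γ⁻¹))
  refine ⟨γ, hγ, k * l₀, ?_⟩
  rintro _ hn ⟨l, rfl⟩ ℱ hsize hedges
  rw [Nat.mul_div_cancel_left l (Nat.pos_of_ne_zero hk0)] at hsize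
  obtain ⟨hpeel, hl⟩ := hl₀ l (Nat.le_of_mul_le_mul_left hn (Nat.pos_of_ne_zero hk0))
  have hcube : (2 : ℝ) ^ l ≤ #ℱ := by
    have hk2 : (2 : ℝ) ≤ k := by exact_mod_cast hk
    exact (le_mul_of_one_le_left (by positivity) (by nlinarith)).trans hsize
  obtain ⟨𝒯, h𝒯, hcard⟩ := exists_isTower_of_card_peel_le hk0 hκ.le hκk hγ.le hγκ hsize
    ((inv_le_iff_one_le_mul₀' hγ).1 (hl.trans hcube)) (hpeel ℱ hcube).le hedges
  exact ⟨𝒯, h𝒯, hcard.trans (by gcongr)⟩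
end
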